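/- arXiv:2406.09510 — 2 statements merged into one kernel-verified Lean document; each statement's English description precedes it below -/
import Mathlib

section
/- For every real u with 0.841 < u < 1, the square-network quantum distribution P_Q^□ is nonlocal on the square network: there do not exist types Λ₁, Λ₂, Λ₃, Λ₄ with probability distributions μ₁, …, μ₄ and response kernels p₁(a₁|λ₄,λ₁), p₂(a₂|λ₁,λ₂), p₃(a₃|λ₂,λ₃), p₄(a₄|λ₃,λ₄), each output ranging over {0, 1₀, 1₁, 2}, such that for all outcomes P_Q^□(a₁,a₂,a₃,a₄) equals the expectation over independently sampled λ₁,…,λ₄ of the product p₁(a₁|λ₄,λ₁)·p₂(a₂|λ₁,λ₂)·p₃(a₃|λ₂,λ₃)·p₄(a₄|λ₃,λ₄). -/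
open MeasureTheory

noncomputable def uco (u : ℝ) : Fin 2 → ℝ := ![u, Real.sqrt (1 - u ^ 2)]
noncomputable def vco (u : ℝ) : Fin 2 → ℝ := ![Real.sqrt (1 - u ^ 2), -u]

inductive Outc where
  | zero : Outc
  | one : Fin 2 → Outc
  | two : Outc
  deriving DecidableEq, Fintype

noncomputable def psiPlus : Fin 2 → Fin 2 → ℝ := fun i j =>
  if i = 0 ∧ j = 1 then (Real.sqrt 2)⁻¹ else if i = 1 ∧ j = 0 then (Real.sqrt 2)⁻¹ else 0

noncomputable def basisVec (u : ℝ) : Outc → Fin 2 → Fin 2 → ℝ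
  | Outc.zero => fun l r => if l = 0 ∧ r = 0 then 1 else 0
  | Outc.one i => fun l r => if l = 0 ∧ r = 1 then uco u i else if l = 1 ∧ r = 0 then vco u i else 0
  | Outc.two => fun l r => if l = 1 ∧ r = 1 then 1 else 0

def finNext {N : ℕ} (k : Fin N) : Fin N := ⟨(k.val + 1) % N, Nat.mod_lt _ k.pos⟩

noncomputable def ringAmp (N : ℕ) (u : ℝ) (a : Fin N → Outc) : ℝ :=
  ∑ L : Fin N → Fin 2, ∑ R : Fin N → Fin 2,
    (∏ k, basisVec u (a k) (L k) (R k)) * ∏ k, psiPlus (R k) (L (finNext k))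

noncomputable def ringP (N : ℕ) (u : ℝ) (a : Fin N → Outc) : ℝ := ringAmp N u a ^ 2

lemma psiPlus_eq (i j : Fin 2) : psiPlus i j = if j = 1 - i then (Real.sqrt 2)⁻¹ else 0 := by
  fin_cases i <;> fin_cases j <;> simp [psiPlus]

lemma sum_fin_succ_fun {n : ℕ} (f : (Fin (n + 1) → Fin 2) → ℝ) :
    ∑ s, f s = ∑ i, ∑ t : Fin n → Fin 2, f (Matrix.vecCons i t) := by
  rw [← (Fin.consEquiv (fun _ => Fin 2)).sum_comp, Fintype.sum_prod_type]
  rfl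

lemma sum_fin_four_fun (f : (Fin 4 → Fin 2) → ℝ) :
    ∑ s, f s = ∑ s₁, ∑ s₂, ∑ s₃, ∑ s₄, f ![s₁, s₂, s₃, s₄] := by
  simp only [sum_fin_succ_fun, Fintype.sum_unique]
  rfl

/-- The four-party amplitude as a sum over the orientations `s₁, …, s₄` of the sources. -/
lemma ringAmp_four (u : ℝ) (a₁ a₂ a₃ a₄ : Outc) :
    ringAmp 4 u ![a₁, a₂, a₃, a₄] = (1 / 4) * ∑ s₁, ∑ s₂, ∑ s₃, ∑ s₄,
      basisVec u a₁ (1 - s₄) s₁ * basisVec u a₂ (1 - s₁) s₂ * basisVec u a₃ (1 - s₂) s₃ *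
        basisVec u a₄ (1 - s₃) s₄ := by
  have h2 : (Real.sqrt 2)⁻¹ ^ 4 = 1 / 4 := by
    rw [inv_pow, show Real.sqrt 2 ^ 4 = (Real.sqrt 2 ^ 2) ^ 2 by ring, Real.sq_sqrt (by norm_num)]
    norm_num
  rw [ringAmp, Finset.sum_comm, sum_fin_four_fun]
  simp_rw [Finset.mul_sum]
  refine Finset.sum_congr rfl fun s₁ _ => Finset.sum_congr rfl fun s₂ _ =>
    Finset.sum_congr rfl fun s₃ _ => Finset.sum_congr rfl fun s₄ _ => ?_
  rw [Finset.sum_eq_single ![1 - s₄, 1 - s₁, 1 - s₂, 1 - s₃]]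
  · rw [← h2]
    simp [Fin.prod_univ_four, psiPlus_eq, finNext]
    ring
  · intro L _ hL
    refine mul_eq_zero_of_right _ ?_
    by_contra h
    apply hL
    rw [Finset.prod_eq_zero_iff.not] at h
    have key : ∀ k, L (finNext k) = 1 - ![s₁, s₂, s₃, s₄] k := by
      intro k
      by_contra hk
      exact h ⟨k, Finset.mem_univ _, by rw [psiPlus_eq, if_neg hk]⟩
    ext i
    fin_cases i
    · exact congrArg Fin.val (key 3)
    · exact congrArg Fin.val (key 0)
    · exact congrArg Fin.val (key 1)
    · exact congrArg Fin.val (key 2)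
  · simp

lemma ringP_rotate (u : ℝ) (a₁ a₂ a₃ a₄ : Outc) :
    ringP 4 u ![a₂, a₃, a₄, a₁] = ringP 4 u ![a₁, a₂, a₃, a₄] := by
  rw [ringP, ringP, ringAmp_four, ringAmp_four]
  simp only [Fin.sum_univ_two]
  ring

/-- The excess of tokens (number of tokens minus one) announced by an outcome. -/
def Outc.excess : Outc → ℝ
  | .zero => -1
  | .one _ => 0
  | .two => 1

lemma Outc.sum_eq (f : Outc → ℝ) : ∑ a, f a = f .zero + f (.one 0) + f (.one 1) + f .two := by
  have : (Finset.univ : Finset Outc) = {.zero, .one 0, .one 1, .two} := by decide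
  rw [this]
  simp [add_assoc]

lemma ringP_eq_zero (u : ℝ) (a₁ a₂ a₃ a₄ : Outc)
    (h : a₁.excess + a₂.excess + a₃.excess + a₄.excess ≠ 0) :
    ringP 4 u ![a₁, a₂, a₃, a₄] = 0 := by
  rw [ringP, ringAmp_four]
  have key : ∀ (a : Outc) (s t : Fin 2),
      basisVec u a (1 - s) t ≠ 0 → a.excess = (t : ℝ) - (s : ℝ) := by
    intro a s t
    rcases a with _ | i | _ <;> fin_cases s <;> fin_cases t <;> simp [basisVec, Outc.excess]
  suffices ∀ s₁ s₂ s₃ s₄ : Fin 2, basisVec u a₁ (1 - s₄) s₁ * basisVec u a₂ (1 - s₁) s₂ *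
      basisVec u a₃ (1 - s₂) s₃ * basisVec u a₄ (1 - s₃) s₄ = 0 by simp [this]
  intro s₁ s₂ s₃ s₄
  by_contra hne
  simp only [mul_eq_zero, not_or] at hne
  obtain ⟨⟨⟨h1, h2⟩, h3⟩, h4⟩ := hne
  apply h
  rw [key _ _ _ h1, key _ _ _ h2, key _ _ _ h3, key _ _ _ h4]
  ring

/-- The joint distribution of two neighbouring parties. -/
lemma sum_ringP (u : ℝ) (hu : u ^ 2 ≤ 1) (a₁ a₂ : Outc) :
    ∑ a₃, ∑ a₄, ringP 4 u ![a₁, a₂, a₃, a₄] = (1 / 8) * ∑ s₄ : Fin 2, ∑ s₂ : Fin 2,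
      (∑ s₁, basisVec u a₁ (1 - s₄) s₁ * basisVec u a₂ (1 - s₁) s₂) ^ 2 := by
  have hv : Real.sqrt (1 - u ^ 2) ^ 2 = 1 - u ^ 2 := Real.sq_sqrt (by linarith)
  simp only [ringP, ringAmp_four, Outc.sum_eq, Fin.sum_univ_two]
  simp [basisVec, uco, vco]
  ring_nf
  rw [show Real.sqrt (1 - u ^ 2) ^ 4 = (Real.sqrt (1 - u ^ 2) ^ 2) ^ 2 by ring, hv]
  ring

/-- The quantum expectation of a product of statistics of two neighbouring outcomes. -/
noncomputable def pairCorr (u : ℝ) (f g : Outc → ℝ) : ℝ :=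
  ∑ a₁, ∑ a₂, f a₁ * g a₂ * ∑ a₃, ∑ a₄, ringP 4 u ![a₁, a₂, a₃, a₄]

lemma pairCorr_excess (u : ℝ) (hu : u ^ 2 ≤ 1) :
    pairCorr u Outc.excess (fun _ => 1) = 0 := by
  have hv : Real.sqrt (1 - u ^ 2) ^ 2 = 1 - u ^ 2 := Real.sq_sqrt (by linarith)
  simp only [pairCorr, sum_ringP u hu]
  simp only [Outc.sum_eq, Fin.sum_univ_two]
  simp [basisVec, uco, vco, Outc.excess, mul_pow, hv]
  ring

lemma pairCorr_excess_excess (u : ℝ) (hu : u ^ 2 ≤ 1) :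
    pairCorr u Outc.excess Outc.excess = -1 / 4 := by
  have hv : Real.sqrt (1 - u ^ 2) ^ 2 = 1 - u ^ 2 := Real.sq_sqrt (by linarith)
  simp only [pairCorr, sum_ringP u hu]
  simp only [Outc.sum_eq, Fin.sum_univ_two]
  simp [basisVec, uco, vco, Outc.excess, mul_pow, hv]
  ring

lemma pairCorr_one (u : ℝ) (hu : u ^ 2 ≤ 1) :
    pairCorr u (fun a => if a = .one 1 then 1 else 0) (fun _ => 1) = 1 / 4 := by
  have hv : Real.sqrt (1 - u ^ 2) ^ 2 = 1 - u ^ 2 := Real.sq_sqrt (by linarith)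
  simp only [pairCorr, sum_ringP u hu]
  simp only [Outc.sum_eq, Fin.sum_univ_two]
  simp [basisVec, uco, vco, mul_pow, hv]
  ring

lemma pairCorr_one_excess (u : ℝ) (hu : u ^ 2 ≤ 1) :
    pairCorr u (fun a => if a = .one 1 then 1 else 0) Outc.excess = (2 * u ^ 2 - 1) / 8 := by
  have hv : Real.sqrt (1 - u ^ 2) ^ 2 = 1 - u ^ 2 := Real.sq_sqrt (by linarith)
  simp only [pairCorr, sum_ringP u hu]
  simp only [Outc.sum_eq, Fin.sum_univ_two]
  simp [basisVec, uco, vco, Outc.excess, mul_pow, hv]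
  ring

lemma ringP_one_one_one_one (u : ℝ) (hu : u ^ 2 ≤ 1) :
    ringP 4 u ![.one 1, .one 1, .one 1, .one 1] = (1 - 2 * u ^ 2 + 2 * u ^ 4) ^ 2 / 16 := by
  have hv : Real.sqrt (1 - u ^ 2) ^ 2 = 1 - u ^ 2 := Real.sq_sqrt (by linarith)
  rw [ringP, ringAmp_four]
  simp [Fin.sum_univ_two, basisVec, uco, vco]
  grind

lemma ringP_one_one_one_zero (u : ℝ) (hu : u ^ 2 ≤ 1) :
    ringP 4 u ![.one 1, .one 1, .one 1, .one 0] =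
      u ^ 2 * (1 - u ^ 2) * (1 - 2 * u ^ 2) ^ 2 / 16 := by
  have hv : Real.sqrt (1 - u ^ 2) ^ 2 = 1 - u ^ 2 := Real.sq_sqrt (by linarith)
  rw [ringP, ringAmp_four]
  simp [Fin.sum_univ_two, basisVec, uco, vco]
  grind

/-- A bounded measurable real function. -/
structure BddMeas {α : Type*} [MeasurableSpace α] (f : α → ℝ) : Prop where
  measurable : Measurable f
  bounded : ∃ C, ∀ x, |f x| ≤ C

namespace BddMeas

variable {α β : Type*} [MeasurableSpace α] [MeasurableSpace β] {f g : α → ℝ}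

lemma const (c : ℝ) : BddMeas fun _ : α => c := ⟨measurable_const, |c|, fun _ => le_rfl⟩

lemma add (hf : BddMeas f) (hg : BddMeas g) : BddMeas fun x => f x + g x := by
  obtain ⟨C, hC⟩ := hf.bounded
  obtain ⟨K, hK⟩ := hg.bounded
  exact ⟨hf.measurable.add hg.measurable, C + K,
    fun x => (abs_add_le _ _).trans (add_le_add (hC x) (hK x))⟩

lemma mul (hf : BddMeas f) (hg : BddMeas g) : BddMeas fun x => f x * g x := by
  obtain ⟨C, hC⟩ := hf.bounded
  obtain ⟨K, hK⟩ := hg.bounded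
  refine ⟨hf.measurable.mul hg.measurable, C * K, fun x => ?_⟩
  rw [abs_mul]
  exact mul_le_mul (hC x) (hK x) (abs_nonneg _) ((abs_nonneg _).trans (hC x))

lemma sub (hf : BddMeas f) (hg : BddMeas g) : BddMeas fun x => f x - g x := by
  simpa [sub_eq_add_neg] using hf.add ((const (-1)).mul hg)

lemma pow (hf : BddMeas f) (n : ℕ) : BddMeas fun x => f x ^ n := by
  induction n with
  | zero => simpa using const 1
  | succ n ih => simpa [pow_succ] using ih.mul hf

lemma comp (hf : BddMeas f) {φ : β → α} (hφ : Measurable φ) : BddMeas fun x => f (φ x) := by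
  obtain ⟨C, hC⟩ := hf.bounded
  exact ⟨hf.measurable.comp hφ, C, fun x => hC _⟩

lemma sum {ι : Type*} (s : Finset ι) {F : ι → α → ℝ} (hF : ∀ i, BddMeas (F i)) :
    BddMeas fun x => ∑ i ∈ s, F i x := by
  classical
  induction s using Finset.induction_on with
  | empty => simpa using const 0
  | insert i s hi ih => simpa [Finset.sum_insert hi] using (hF i).add ih

lemma integrable (hf : BddMeas f) (μ : Measure α) [IsFiniteMeasure μ] : Integrable f μ := by
  obtain ⟨C, hC⟩ := hf.bounded
  exact Integrable.of_bound hf.measurable.aestronglyMeasurable C (ae_of_all _ hC)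

lemma integral_left {F : α → β → ℝ} (hF : BddMeas fun q : α × β => F q.1 q.2)
    (μ : Measure α) [IsProbabilityMeasure μ] : BddMeas fun y => ∫ x, F x y ∂μ := by
  obtain ⟨C, hC⟩ := hF.bounded
  refine ⟨(StronglyMeasurable.integral_prod_left (f := F)
    hF.measurable.stronglyMeasurable).measurable, C, fun y => ?_⟩
  simpa using norm_integral_le_of_norm_le_const (μ := μ) (f := fun x => F x y)
    (ae_of_all _ fun x => hC (x, y))

end BddMeas

/-- If `f` and `g` are independent, centred, of variance `1 / 4`, and `f - g` takes values in
`{-1, 0, 1}`, then `f` takes values in `{-1 / 2, 1 / 2}`. -/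
lemma ae_sq_eq_of_sub_pow_three {α β : Type*} [MeasurableSpace α] [MeasurableSpace β]
    {μ : Measure α} {ν : Measure β} [IsProbabilityMeasure μ] [IsProbabilityMeasure ν]
    {f : β → ℝ} {g : α → ℝ} (hf : BddMeas f) (hg : BddMeas g)
    (hf1 : ∫ y, f y ∂ν = 0) (hg1 : ∫ x, g x ∂μ = 0)
    (hf2 : ∫ y, f y ^ 2 ∂ν = 1 / 4) (hg2 : ∫ x, g x ^ 2 ∂μ = 1 / 4)
    (h : ∀ᵐ q ∂(μ.prod ν), (f q.2 - g q.1) ^ 3 = f q.2 - g q.1) :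
    ∀ᵐ y ∂ν, f y ^ 2 = 1 / 4 := by
  have hm : ∀ (G : α → ℝ) (F : β → ℝ), ∫ q, G q.1 * F q.2 ∂(μ.prod ν) =
      (∫ x, G x ∂μ) * ∫ y, F y ∂ν := fun G F => integral_prod_mul G F
  have hi : ∀ (m n : ℕ), Integrable (fun q : α × β => g q.1 ^ m * f q.2 ^ n) (μ.prod ν) :=
    fun m n => (((hg.comp measurable_fst).pow m).mul ((hf.comp measurable_snd).pow n)).integrable _
  have h0 : ∫ q, (g q.1 ^ 0 * f q.2 ^ 4 - 3 * (g q.1 ^ 1 * f q.2 ^ 3) +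
      3 * (g q.1 ^ 2 * f q.2 ^ 2) - g q.1 ^ 3 * f q.2 ^ 1 - g q.1 ^ 0 * f q.2 ^ 2 +
      g q.1 ^ 1 * f q.2 ^ 1) ∂(μ.prod ν) = 0 := by
    rw [← integral_zero (α × β) ℝ (μ := μ.prod ν)]
    refine integral_congr_ae (h.mono fun q hq => ?_)
    dsimp only
    linear_combination f q.2 * hq
  rw [integral_add (by fun_prop) (hi _ _), integral_sub (by fun_prop) (hi _ _),
    integral_sub (by fun_prop) (hi _ _), integral_add (by fun_prop) ((hi _ _).const_mul _),
    integral_sub (hi _ _) ((hi _ _).const_mul _), integral_const_mul, integral_const_mul,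
    hm (fun x => g x ^ 0) (fun y => f y ^ 4), hm (fun x => g x ^ 1) (fun y => f y ^ 3),
    hm (fun x => g x ^ 2) (fun y => f y ^ 2), hm (fun x => g x ^ 3) (fun y => f y ^ 1),
    hm (fun x => g x ^ 0) (fun y => f y ^ 2), hm (fun x => g x ^ 1) (fun y => f y ^ 1)] at h0
  simp only [pow_zero, pow_one, integral_const, probReal_univ, smul_eq_mul, mul_one, one_mul, hf1,
    hg1, hf2, hg2] at h0
  have h1 : ∫ y, (f y ^ 2 - 1 / 4) ^ 2 ∂ν = 0 := by
    have : ∀ y, (f y ^ 2 - 1 / 4) ^ 2 = f y ^ 4 - 1 / 2 * f y ^ 2 + 1 / 16 := fun y => by ring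
    simp_rw [this]
    rw [integral_add (((hf.pow 4).sub ((BddMeas.const _).mul (hf.pow 2))).integrable _)
      (integrable_const _), integral_sub ((hf.pow 4).integrable _)
      (((hf.pow 2).integrable _).const_mul _), integral_const_mul, hf2]
    simp only [integral_const, probReal_univ, smul_eq_mul]
    linarith
  rw [integral_eq_zero_iff_of_nonneg (fun y => sq_nonneg _)
    ((((hf.pow 2).sub (BddMeas.const _)).pow 2).integrable _)] at h1
  filter_upwards [h1] with y hy
  have := pow_eq_zero_iff (two_ne_zero) |>.1 hy
  linarith

/-- The response function of a party connected to two sources. -/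
structure Response (X Y : Type) [MeasurableSpace X] [MeasurableSpace Y] where
  prob : Outc → X → Y → ℝ
  measurable : ∀ a, Measurable fun q : X × Y => prob a q.1 q.2
  nonneg : ∀ a x y, 0 ≤ prob a x y
  sum_eq_one : ∀ x y, ∑ a, prob a x y = 1

namespace Response

variable {X Y : Type} [MeasurableSpace X] [MeasurableSpace Y] (r : Response X Y)

/-- The conditional mean of a statistic of the outcome. -/
noncomputable def avg (f : Outc → ℝ) (x : X) (y : Y) : ℝ := ∑ a, f a * r.prob a x y

lemma avg_one (x : X) (y : Y) : r.avg (fun _ => 1) x y = 1 := by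
  simp [avg, r.sum_eq_one]

lemma avg_indicator (b : Outc) (x : X) (y : Y) :
    r.avg (fun a => if a = b then 1 else 0) x y = r.prob b x y := by
  simp [avg]

lemma bddMeas (a : Outc) : BddMeas fun q : X × Y => r.prob a q.1 q.2 := by
  refine ⟨r.measurable a, 1, fun q => ?_⟩
  rw [abs_of_nonneg (r.nonneg _ _ _), ← r.sum_eq_one q.1 q.2]
  exact Finset.single_le_sum (f := fun a => r.prob a q.1 q.2) (fun b _ => r.nonneg b _ _)
    (Finset.mem_univ a)

lemma bddMeas_avg (f : Outc → ℝ) : BddMeas fun q : X × Y => r.avg f q.1 q.2 :=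
  BddMeas.sum _ fun a => (BddMeas.const (f a)).mul (r.bddMeas a)

/-- The conditional variance of the token excess. -/
noncomputable def var (x : X) (y : Y) : ℝ :=
  r.avg (fun a => a.excess ^ 2) x y - r.avg Outc.excess x y ^ 2

lemma sum_mul_sq_add (c e : ℝ) (x : X) (y : Y) :
    ∑ a, r.prob a x y * ((c + a.excess) ^ 2 + e) =
      (c + r.avg Outc.excess x y) ^ 2 + (e + r.var x y) := by
  have h := r.sum_eq_one x y
  simp only [var, avg, Outc.sum_eq] at h ⊢
  linear_combination (c ^ 2 + e) * h

lemma var_nonneg (x : X) (y : Y) : 0 ≤ r.var x y := by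
  have h := r.sum_mul_sq_add (-r.avg Outc.excess x y) 0 x y
  have h' : 0 ≤ ∑ a : Outc, r.prob a x y * ((-r.avg Outc.excess x y + a.excess) ^ 2 + 0) :=
    Finset.sum_nonneg fun a _ => mul_nonneg (r.nonneg a x y) (by positivity)
  rw [h] at h'
  simpa using h'

lemma prob_one_add_prob_one (x : X) (y : Y) (h : r.var x y = 0) :
    r.prob (.one 1) x y + r.prob (.one 0) x y = 1 - r.avg Outc.excess x y ^ 2 := by
  have hs := r.sum_eq_one x y
  simp only [var, avg, Outc.sum_eq, Outc.excess] at h hs ⊢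
  linarith

lemma avg_excess_pow_three (x : X) (y : Y) (h : r.var x y = 0) :
    r.avg Outc.excess x y ^ 3 = r.avg Outc.excess x y := by
  have hs := r.sum_eq_one x y
  have h0 := r.nonneg .zero x y
  have h1 := r.nonneg (.one 0) x y
  have h1' := r.nonneg (.one 1) x y
  have h2 := r.nonneg .two x y
  simp only [var, avg, Outc.sum_eq, Outc.excess] at h hs ⊢
  generalize r.prob .zero x y = p at *
  generalize r.prob .two x y = q at *
  have hD : (q - p) ^ 2 = p + q := by linarith
  have hpq : p * q = 0 := by
    have : 4 * (p * q) = (p + q) * (p + q - 1) := by linear_combination -hD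
    nlinarith [mul_nonneg h0 h2]
  rcases mul_eq_zero.1 hpq with rfl | rfl
  · have : q * (q - 1) = 0 := by linear_combination hD
    linear_combination (q + 1) * this
  · have : p * (p - 1) = 0 := by linear_combination hD
    linear_combination -(p + 1) * this

end Response

lemma witness_nonneg {t₁ t₂ t₃ t₄ x₁ x₂ x₃ x₄ z₁ z₂ z₃ z₄ : ℝ}
    (ht₁ : t₁ ^ 2 = 1 / 4) (ht₂ : t₂ ^ 2 = 1 / 4) (ht₃ : t₃ ^ 2 = 1 / 4) (ht₄ : t₄ ^ 2 = 1 / 4)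
    (hx₁ : 0 ≤ x₁) (hx₂ : 0 ≤ x₂) (hx₃ : 0 ≤ x₃) (hx₄ : 0 ≤ x₄)
    (hz₁ : 0 ≤ z₁) (hz₂ : 0 ≤ z₂) (hz₃ : 0 ≤ z₃) (hz₄ : 0 ≤ z₄)
    (h₁ : x₁ + z₁ = 1 - (t₁ - t₄) ^ 2) (h₂ : x₂ + z₂ = 1 - (t₂ - t₁) ^ 2)
    (h₃ : x₃ + z₃ = 1 - (t₃ - t₂) ^ 2) (h₄ : x₄ + z₄ = 1 - (t₄ - t₃) ^ 2) :
    0 ≤ x₁ * x₂ * x₃ * x₄ + (1 / 2) * (x₁ * x₂ * x₃ * z₄ + x₁ * x₂ * z₃ * x₄ + x₁ * z₂ * x₃ * x₄ +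
        z₁ * x₂ * x₃ * x₄) +
      (1 / 2 - t₄) * (1 / 2 - t₁) * ((1 / 2 - t₂) * (1 / 2 - t₃)) -
      (1 / 2) * ((1 / 2 - t₄) * (1 / 2 - t₁) * ((1 / 2 - t₂) * (1 / 2 - t₃)) *
        (x₁ + x₂ + x₃ + x₄)) := by
  have hP : 0 ≤ x₁ * x₂ * x₃ * x₄ + (1 / 2) * (x₁ * x₂ * x₃ * z₄ + x₁ * x₂ * z₃ * x₄ +
      x₁ * z₂ * x₃ * x₄ + z₁ * x₂ * x₃ * x₄) := by positivity
  have sign : ∀ {t : ℝ}, t ^ 2 = 1 / 4 → t = 1 / 2 ∨ t = -1 / 2 := fun {t} ht => by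
    have e : (t - 1 / 2) * (t + 1 / 2) = 0 := by linear_combination ht
    rcases mul_eq_zero.1 e with e | e
    · left; linarith
    · right; linarith
  rcases sign ht₁ with rfl | rfl
  · linarith
  rcases sign ht₂ with rfl | rfl
  · linarith
  rcases sign ht₃ with rfl | rfl
  · linarith
  rcases sign ht₄ with rfl | rfl
  · linarith
  obtain rfl : x₁ = 1 - z₁ := by linarith
  obtain rfl : x₂ = 1 - z₂ := by linarith
  obtain rfl : x₃ = 1 - z₃ := by linarith
  obtain rfl : x₄ = 1 - z₄ := by linarith
  have hQ : 0 ≤ z₁ * z₂ * z₃ * z₄ + (1 / 2) * (z₁ * z₂ * z₃ * (1 - z₄) + z₁ * z₂ * (1 - z₃) * z₄ +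
      z₁ * (1 - z₂) * z₃ * z₄ + (1 - z₁) * z₂ * z₃ * z₄) := by positivity
  refine hQ.trans (le_of_eq ?_)
  ring

/-- A local model of the quantum distribution on the square network. Hidden variables are listed
as `((x₄, x₁), (x₂, x₃))`, starting with those of the first party. -/
structure SquareModel (u : ℝ) (Λ₁ Λ₂ Λ₃ Λ₄ : Type) [MeasurableSpace Λ₁] [MeasurableSpace Λ₂]
    [MeasurableSpace Λ₃] [MeasurableSpace Λ₄] where
  μ₁ : Measure Λ₁
  μ₂ : Measure Λ₂
  μ₃ : Measure Λ₃
  μ₄ : Measure Λ₄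
  prob₁ : IsProbabilityMeasure μ₁
  prob₂ : IsProbabilityMeasure μ₂
  prob₃ : IsProbabilityMeasure μ₃
  prob₄ : IsProbabilityMeasure μ₄
  r₁ : Response Λ₄ Λ₁
  r₂ : Response Λ₁ Λ₂
  r₃ : Response Λ₂ Λ₃
  r₄ : Response Λ₃ Λ₄
  integral_eq : ∀ a₁ a₂ a₃ a₄, ∫ ω, r₁.prob a₁ ω.1.1 ω.1.2 * r₂.prob a₂ ω.1.2 ω.2.1 *
      r₃.prob a₃ ω.2.1 ω.2.2 * r₄.prob a₄ ω.2.2 ω.1.1 ∂((μ₄.prod μ₁).prod (μ₂.prod μ₃)) =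
    ringP 4 u ![a₁, a₂, a₃, a₄]

attribute [instance] SquareModel.prob₁ SquareModel.prob₂ SquareModel.prob₃ SquareModel.prob₄

/-- Cyclic relabelling of the hidden variables of the square. -/
def rotateVars {Λ₁ Λ₂ Λ₃ Λ₄ : Type} (ω : (Λ₄ × Λ₁) × (Λ₂ × Λ₃)) : (Λ₁ × Λ₂) × (Λ₃ × Λ₄) :=
  ((ω.1.2, ω.2.1), (ω.2.2, ω.1.1))

lemma measurePreserving_rotateVars {Λ₁ Λ₂ Λ₃ Λ₄ : Type} [MeasurableSpace Λ₁] [MeasurableSpace Λ₂]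
    [MeasurableSpace Λ₃] [MeasurableSpace Λ₄] (μ₁ : Measure Λ₁) (μ₂ : Measure Λ₂)
    (μ₃ : Measure Λ₃) (μ₄ : Measure Λ₄) [IsProbabilityMeasure μ₁] [IsProbabilityMeasure μ₂]
    [IsProbabilityMeasure μ₃] [IsProbabilityMeasure μ₄] :
    MeasurePreserving rotateVars ((μ₄.prod μ₁).prod (μ₂.prod μ₃))
      ((μ₁.prod μ₂).prod (μ₃.prod μ₄)) := by
  have h1 := measurePreserving_prodAssoc μ₄ μ₁ (μ₂.prod μ₃)
  have h2 := Measure.measurePreserving_swap (μ := μ₄) (ν := μ₁.prod (μ₂.prod μ₃))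
  have h3 := ((measurePreserving_prodAssoc μ₁ μ₂ μ₃).symm _).prod (MeasurePreserving.id μ₄)
  have h4 := measurePreserving_prodAssoc (μ₁.prod μ₂) μ₃ μ₄
  exact h4.comp (h3.comp (h2.comp h1))

namespace SquareModel

variable {u : ℝ} {Λ₁ Λ₂ Λ₃ Λ₄ : Type} [MeasurableSpace Λ₁] [MeasurableSpace Λ₂]
  [MeasurableSpace Λ₃] [MeasurableSpace Λ₄]

/-- The joint law of the hidden variables. -/
noncomputable abbrev law (M : SquareModel u Λ₁ Λ₂ Λ₃ Λ₄) : Measure ((Λ₄ × Λ₁) × (Λ₂ × Λ₃)) :=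
  (M.μ₄.prod M.μ₁).prod (M.μ₂.prod M.μ₃)

lemma integral_rotateVars (M : SquareModel u Λ₁ Λ₂ Λ₃ Λ₄) {f : (Λ₁ × Λ₂) × (Λ₃ × Λ₄) → ℝ}
    (hf : Measurable f) :
    ∫ ω, f ω ∂((M.μ₁.prod M.μ₂).prod (M.μ₃.prod M.μ₄)) = ∫ ω, f (rotateVars ω) ∂M.law := by
  have h := measurePreserving_rotateVars M.μ₁ M.μ₂ M.μ₃ M.μ₄
  rw [← h.map_eq, integral_map h.measurable.aemeasurable hf.aestronglyMeasurable]

lemma bddMeas₁ (M : SquareModel u Λ₁ Λ₂ Λ₃ Λ₄) (a : Outc) :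
    BddMeas fun ω : (Λ₄ × Λ₁) × (Λ₂ × Λ₃) => M.r₁.prob a ω.1.1 ω.1.2 :=
  (M.r₁.bddMeas a).comp measurable_fst

lemma bddMeas₂ (M : SquareModel u Λ₁ Λ₂ Λ₃ Λ₄) (a : Outc) :
    BddMeas fun ω : (Λ₄ × Λ₁) × (Λ₂ × Λ₃) => M.r₂.prob a ω.1.2 ω.2.1 :=
  (M.r₂.bddMeas a).comp (φ := fun ω : (Λ₄ × Λ₁) × (Λ₂ × Λ₃) => (ω.1.2, ω.2.1)) (by fun_prop)

lemma bddMeas₃ (M : SquareModel u Λ₁ Λ₂ Λ₃ Λ₄) (a : Outc) :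
    BddMeas fun ω : (Λ₄ × Λ₁) × (Λ₂ × Λ₃) => M.r₃.prob a ω.2.1 ω.2.2 :=
  (M.r₃.bddMeas a).comp measurable_snd

lemma bddMeas₄ (M : SquareModel u Λ₁ Λ₂ Λ₃ Λ₄) (a : Outc) :
    BddMeas fun ω : (Λ₄ × Λ₁) × (Λ₂ × Λ₃) => M.r₄.prob a ω.2.2 ω.1.1 :=
  (M.r₄.bddMeas a).comp (φ := fun ω : (Λ₄ × Λ₁) × (Λ₂ × Λ₃) => (ω.2.2, ω.1.1)) (by fun_prop)

lemma bddMeas_prod (M : SquareModel u Λ₁ Λ₂ Λ₃ Λ₄) (a₁ a₂ a₃ a₄ : Outc) :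
    BddMeas fun ω : (Λ₄ × Λ₁) × (Λ₂ × Λ₃) => M.r₁.prob a₁ ω.1.1 ω.1.2 * M.r₂.prob a₂ ω.1.2 ω.2.1 *
      M.r₃.prob a₃ ω.2.1 ω.2.2 * M.r₄.prob a₄ ω.2.2 ω.1.1 :=
  (((M.bddMeas₁ a₁).mul (M.bddMeas₂ a₂)).mul (M.bddMeas₃ a₃)).mul (M.bddMeas₄ a₄)

/-- The same model with the parties relabelled cyclically. -/
def rotate (M : SquareModel u Λ₁ Λ₂ Λ₃ Λ₄) : SquareModel u Λ₂ Λ₃ Λ₄ Λ₁ where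
  μ₁ := M.μ₂
  μ₂ := M.μ₃
  μ₃ := M.μ₄
  μ₄ := M.μ₁
  prob₁ := M.prob₂
  prob₂ := M.prob₃
  prob₃ := M.prob₄
  prob₄ := M.prob₁
  r₁ := M.r₂
  r₂ := M.r₃
  r₃ := M.r₄
  r₄ := M.r₁
  integral_eq a₁ a₂ a₃ a₄ := by
    have hm : Measurable fun ω : (Λ₁ × Λ₂) × (Λ₃ × Λ₄) =>
        M.r₂.prob a₁ ω.1.1 ω.1.2 * M.r₃.prob a₂ ω.1.2 ω.2.1 *
          M.r₄.prob a₃ ω.2.1 ω.2.2 * M.r₁.prob a₄ ω.2.2 ω.1.1 :=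
      ((((M.r₂.bddMeas a₁).comp measurable_fst).mul ((M.r₃.bddMeas a₂).comp
        (φ := fun ω : (Λ₁ × Λ₂) × (Λ₃ × Λ₄) => (ω.1.2, ω.2.1)) (by fun_prop))).mul
        ((M.r₄.bddMeas a₃).comp measurable_snd)).mul ((M.r₁.bddMeas a₄).comp
        (φ := fun ω : (Λ₁ × Λ₂) × (Λ₃ × Λ₄) => (ω.2.2, ω.1.1)) (by fun_prop)) |>.measurable
    rw [M.integral_rotateVars hm, ringP_rotate, ← M.integral_eq]
    refine integral_congr_ae (ae_of_all _ fun ω => ?_)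
    simp only [rotateVars]
    ring

/-- Expectations of outcome statistics in the model agree with the quantum ones. -/
lemma integral_statistic (M : SquareModel u Λ₁ Λ₂ Λ₃ Λ₄) (F : Outc → Outc → Outc → Outc → ℝ) :
    ∫ ω, ∑ a₁, ∑ a₂, ∑ a₃, ∑ a₄, F a₁ a₂ a₃ a₄ * (M.r₁.prob a₁ ω.1.1 ω.1.2 *
      M.r₂.prob a₂ ω.1.2 ω.2.1 * M.r₃.prob a₃ ω.2.1 ω.2.2 * M.r₄.prob a₄ ω.2.2 ω.1.1) ∂M.law =
    ∑ a₁, ∑ a₂, ∑ a₃, ∑ a₄, F a₁ a₂ a₃ a₄ * ringP 4 u ![a₁, a₂, a₃, a₄] := by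
  have hb : ∀ a₁ a₂ a₃ a₄, BddMeas fun ω : (Λ₄ × Λ₁) × (Λ₂ × Λ₃) => F a₁ a₂ a₃ a₄ *
      (M.r₁.prob a₁ ω.1.1 ω.1.2 * M.r₂.prob a₂ ω.1.2 ω.2.1 *
        M.r₃.prob a₃ ω.2.1 ω.2.2 * M.r₄.prob a₄ ω.2.2 ω.1.1) :=
    fun a₁ a₂ a₃ a₄ => (BddMeas.const _).mul (M.bddMeas_prod a₁ a₂ a₃ a₄)
  rw [integral_finsetSum _ fun a₁ _ => (BddMeas.sum _ fun a₂ => BddMeas.sum _ fun a₃ =>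
    BddMeas.sum _ fun a₄ => hb a₁ a₂ a₃ a₄).integrable _]
  refine Finset.sum_congr rfl fun a₁ _ => ?_
  rw [integral_finsetSum _ fun a₂ _ => (BddMeas.sum _ fun a₃ =>
    BddMeas.sum _ fun a₄ => hb a₁ a₂ a₃ a₄).integrable _]
  refine Finset.sum_congr rfl fun a₂ _ => ?_
  rw [integral_finsetSum _ fun a₃ _ => (BddMeas.sum _ fun a₄ => hb a₁ a₂ a₃ a₄).integrable _]
  refine Finset.sum_congr rfl fun a₃ _ => ?_
  rw [integral_finsetSum _ fun a₄ _ => (hb a₁ a₂ a₃ a₄).integrable _]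
  refine Finset.sum_congr rfl fun a₄ _ => ?_
  rw [integral_const_mul, M.integral_eq]

lemma integral_avg_mul_avg (M : SquareModel u Λ₁ Λ₂ Λ₃ Λ₄) (f g : Outc → ℝ) :
    ∫ ω, M.r₁.avg f ω.1.1 ω.1.2 * M.r₂.avg g ω.1.2 ω.2.1 ∂M.law = pairCorr u f g := by
  have h := M.integral_statistic fun a₁ a₂ _ _ => f a₁ * g a₂
  simp only [pairCorr, Finset.mul_sum]
  rw [← h]
  refine integral_congr_ae (ae_of_all _ fun ω => ?_)
  have key : ∀ a₁ a₂, ∑ a₃, ∑ a₄, f a₁ * g a₂ * (M.r₁.prob a₁ ω.1.1 ω.1.2 *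
      M.r₂.prob a₂ ω.1.2 ω.2.1 * M.r₃.prob a₃ ω.2.1 ω.2.2 * M.r₄.prob a₄ ω.2.2 ω.1.1) =
      f a₁ * M.r₁.prob a₁ ω.1.1 ω.1.2 * (g a₂ * M.r₂.prob a₂ ω.1.2 ω.2.1) := fun a₁ a₂ => by
    simp only [← Finset.mul_sum, Response.sum_eq_one, mul_one]
    ring
  simp only [key, Response.avg, Finset.sum_mul_sum]

/-- Almost surely the mean token excesses cancel and each party's token count is deterministic. -/
lemma ae_balanced (M : SquareModel u Λ₁ Λ₂ Λ₃ Λ₄) :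
    ∀ᵐ ω ∂M.law, (M.r₁.avg Outc.excess ω.1.1 ω.1.2 + M.r₂.avg Outc.excess ω.1.2 ω.2.1 +
      M.r₃.avg Outc.excess ω.2.1 ω.2.2 + M.r₄.avg Outc.excess ω.2.2 ω.1.1 = 0) ∧
      M.r₁.var ω.1.1 ω.1.2 = 0 := by
  have h := M.integral_statistic fun a₁ a₂ a₃ a₄ =>
    (a₁.excess + a₂.excess + a₃.excess + a₄.excess) ^ 2
  have h0 : ∑ a₁ : Outc, ∑ a₂ : Outc, ∑ a₃ : Outc, ∑ a₄ : Outc,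
      (a₁.excess + a₂.excess + a₃.excess + a₄.excess) ^ 2 * ringP 4 u ![a₁, a₂, a₃, a₄] = 0 := by
    refine Finset.sum_eq_zero fun a₁ _ => Finset.sum_eq_zero fun a₂ _ =>
      Finset.sum_eq_zero fun a₃ _ => Finset.sum_eq_zero fun a₄ _ => ?_
    by_cases hz : a₁.excess + a₂.excess + a₃.excess + a₄.excess = 0
    · simp [hz]
    · rw [ringP_eq_zero u _ _ _ _ hz, mul_zero]
  rw [h0, integral_eq_zero_iff_of_nonneg] at h
  · filter_upwards [h] with ω hω
    have key : ∑ a₁, M.r₁.prob a₁ ω.1.1 ω.1.2 * ∑ a₂, M.r₂.prob a₂ ω.1.2 ω.2.1 *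
        ∑ a₃, M.r₃.prob a₃ ω.2.1 ω.2.2 * ∑ a₄, M.r₄.prob a₄ ω.2.2 ω.1.1 *
        ((0 + a₁.excess + a₂.excess + a₃.excess + a₄.excess) ^ 2 + 0) = 0 := by
      refine Eq.trans ?_ hω
      simp only [Finset.mul_sum]
      refine Finset.sum_congr rfl fun a₁ _ => Finset.sum_congr rfl fun a₂ _ =>
        Finset.sum_congr rfl fun a₃ _ => Finset.sum_congr rfl fun a₄ _ => ?_
      ring
    simp_rw [Response.sum_mul_sq_add, add_right_comm _ _ (M.r₄.avg Outc.excess ω.2.2 ω.1.1),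
      Response.sum_mul_sq_add, add_right_comm _ _ (M.r₃.avg Outc.excess ω.2.1 ω.2.2),
      Response.sum_mul_sq_add, add_right_comm _ _ (M.r₂.avg Outc.excess ω.1.2 ω.2.1),
      Response.sum_mul_sq_add] at key
    have v₁ := M.r₁.var_nonneg ω.1.1 ω.1.2
    have v₂ := M.r₂.var_nonneg ω.1.2 ω.2.1
    have v₃ := M.r₃.var_nonneg ω.2.1 ω.2.2
    have v₄ := M.r₄.var_nonneg ω.2.2 ω.1.1
    refine ⟨pow_eq_zero_iff two_ne_zero |>.1 (le_antisymm ?_ (sq_nonneg _)), ?_⟩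
    · linarith
    · nlinarith
  · intro ω
    refine Finset.sum_nonneg fun a₁ _ => Finset.sum_nonneg fun a₂ _ =>
      Finset.sum_nonneg fun a₃ _ => Finset.sum_nonneg fun a₄ _ => mul_nonneg (sq_nonneg _) ?_
    exact mul_nonneg (mul_nonneg (mul_nonneg (M.r₁.nonneg _ _ _) (M.r₂.nonneg _ _ _))
      (M.r₃.nonneg _ _ _)) (M.r₄.nonneg _ _ _)
  · exact (BddMeas.sum _ fun a₁ => BddMeas.sum _ fun a₂ => BddMeas.sum _ fun a₃ =>
      BddMeas.sum _ fun a₄ => (BddMeas.const _).mul (M.bddMeas_prod a₁ a₂ a₃ a₄)).integrable _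

/-- The centred token function of the first source. -/
noncomputable def token (M : SquareModel u Λ₁ Λ₂ Λ₃ Λ₄) (x : Λ₁) : ℝ :=
  ∫ y, M.r₁.avg Outc.excess y x ∂M.μ₄

lemma bddMeas_token (M : SquareModel u Λ₁ Λ₂ Λ₃ Λ₄) : BddMeas M.token :=
  BddMeas.integral_left (F := fun y x => M.r₁.avg Outc.excess y x)
    (M.r₁.bddMeas_avg Outc.excess) M.μ₄

lemma integral_avg (M : SquareModel u Λ₁ Λ₂ Λ₃ Λ₄) (f : Outc → ℝ) :
    ∫ q, M.r₁.avg f q.1 q.2 ∂(M.μ₄.prod M.μ₁) = pairCorr u f (fun _ => 1) := by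
  rw [← M.integral_avg_mul_avg]
  simp only [Response.avg_one, mul_one]
  have h := integral_prod_mul (μ := M.μ₄.prod M.μ₁) (ν := M.μ₂.prod M.μ₃)
    (fun q => M.r₁.avg f q.1 q.2) (fun _ => (1 : ℝ))
  simpa using h.symm

lemma integral_excess (M : SquareModel u Λ₁ Λ₂ Λ₃ Λ₄) (hu : u ^ 2 ≤ 1) :
    ∫ q, M.r₁.avg Outc.excess q.1 q.2 ∂(M.μ₄.prod M.μ₁) = 0 := by
  rw [M.integral_avg, pairCorr_excess u hu]

lemma integral_token (M : SquareModel u Λ₁ Λ₂ Λ₃ Λ₄) (hu : u ^ 2 ≤ 1) :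
    ∫ x, M.token x ∂M.μ₁ = 0 := by
  rw [← M.integral_excess hu, integral_prod_symm _ ((M.r₁.bddMeas_avg _).integrable _)]
  rfl

lemma ae_excess_add (M : SquareModel u Λ₁ Λ₂ Λ₃ Λ₄) (hu : u ^ 2 ≤ 1) :
    ∀ᵐ q ∂(M.μ₄.prod M.μ₁), M.r₁.avg Outc.excess q.1 q.2 =
      -(∫ y, M.r₂.avg Outc.excess q.2 y ∂M.μ₂) - M.rotate.rotate.rotate.token q.1 := by
  filter_upwards [Measure.ae_ae_of_ae_prod M.ae_balanced] with q hq
  have i₂ : Integrable (fun r : Λ₂ × Λ₃ => M.r₂.avg Outc.excess q.2 r.1) (M.μ₂.prod M.μ₃) :=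
    ((M.r₂.bddMeas_avg _).comp (φ := fun r : Λ₂ × Λ₃ => (q.2, r.1)) (by fun_prop)).integrable _
  have i₃ : Integrable (fun r : Λ₂ × Λ₃ => M.r₃.avg Outc.excess r.1 r.2) (M.μ₂.prod M.μ₃) :=
    (M.r₃.bddMeas_avg _).integrable _
  have i₄ : Integrable (fun r : Λ₂ × Λ₃ => M.r₄.avg Outc.excess r.2 q.1) (M.μ₂.prod M.μ₃) :=
    ((M.r₄.bddMeas_avg _).comp (φ := fun r : Λ₂ × Λ₃ => (r.2, q.1)) (by fun_prop)).integrable _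
  have h0 := integral_eq_zero_of_ae (hq.mono fun r hr => hr.1)
  rw [integral_add (by fun_prop) i₄, integral_add (by fun_prop) i₃,
    integral_add (by fun_prop) i₂,
    show ∫ r, M.r₃.avg Outc.excess r.1 r.2 ∂(M.μ₂.prod M.μ₃) = 0 from
      M.rotate.rotate.integral_excess hu,
    integral_fun_fst (fun y => M.r₂.avg Outc.excess q.2 y),
    integral_fun_snd (fun y => M.r₄.avg Outc.excess y q.1)] at h0
  simp only [integral_const, probReal_univ, one_smul] at h0
  change _ = _ - ∫ y, M.r₄.avg Outc.excess y q.1 ∂M.μ₃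
  linarith

lemma ae_integral_excess_right (M : SquareModel u Λ₁ Λ₂ Λ₃ Λ₄) (hu : u ^ 2 ≤ 1) :
    ∀ᵐ x ∂M.μ₁, ∫ y, M.r₂.avg Outc.excess x y ∂M.μ₂ = -M.token x := by
  have h := Measure.measurePreserving_swap (μ := M.μ₁) (ν := M.μ₄)
    |>.quasiMeasurePreserving.ae (M.ae_excess_add hu)
  filter_upwards [Measure.ae_ae_of_ae_prod h] with x hx
  have h0 := integral_congr_ae hx
  dsimp only [Prod.fst_swap, Prod.snd_swap] at h0
  rw [integral_sub (integrable_const _) (M.rotate.rotate.rotate.bddMeas_token.integrable M.μ₄),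
    show ∫ y, M.rotate.rotate.rotate.token y ∂M.μ₄ = 0 from
      M.rotate.rotate.rotate.integral_token hu] at h0
  simp only [integral_const, probReal_univ, one_smul] at h0
  change _ = -∫ y, M.r₁.avg Outc.excess y x ∂M.μ₄
  linarith

/-- The token excess of the first party is the difference of the tokens of its two sources. -/
lemma ae_excess_eq (M : SquareModel u Λ₁ Λ₂ Λ₃ Λ₄) (hu : u ^ 2 ≤ 1) :
    ∀ᵐ q ∂(M.μ₄.prod M.μ₁), M.r₁.avg Outc.excess q.1 q.2 =
      M.token q.2 - M.rotate.rotate.rotate.token q.1 := by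
  filter_upwards [M.ae_excess_add hu, Measure.quasiMeasurePreserving_snd.ae
    (M.ae_integral_excess_right hu)] with q h₁ h₂
  rw [h₁, h₂, neg_neg]

lemma pairCorr_eq_neg_integral (M : SquareModel u Λ₁ Λ₂ Λ₃ Λ₄) (hu : u ^ 2 ≤ 1) (f : Outc → ℝ) :
    pairCorr u f Outc.excess = -∫ q, M.r₁.avg f q.1 q.2 * M.token q.2 ∂(M.μ₄.prod M.μ₁) := by
  have hi : Integrable (fun ω : (Λ₄ × Λ₁) × (Λ₂ × Λ₃) => M.r₁.avg f ω.1.1 ω.1.2 *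
      M.r₂.avg Outc.excess ω.1.2 ω.2.1) M.law :=
    (((M.r₁.bddMeas_avg f).comp measurable_fst).mul ((M.r₂.bddMeas_avg _).comp
      (φ := fun ω : (Λ₄ × Λ₁) × (Λ₂ × Λ₃) => (ω.1.2, ω.2.1)) (by fun_prop))).integrable _
  rw [← M.integral_avg_mul_avg, integral_prod _ hi, ← integral_neg]
  refine integral_congr_ae ?_
  filter_upwards [Measure.quasiMeasurePreserving_snd.ae (M.ae_integral_excess_right hu)] with q hq
  rw [integral_const_mul, integral_fun_fst (fun y => M.r₂.avg Outc.excess q.2 y), hq]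
  simp

lemma integral_token_sq (M : SquareModel u Λ₁ Λ₂ Λ₃ Λ₄) (hu : u ^ 2 ≤ 1) :
    ∫ x, M.token x ^ 2 ∂M.μ₁ = 1 / 4 := by
  have h := M.pairCorr_eq_neg_integral hu Outc.excess
  rw [pairCorr_excess_excess u hu, integral_prod_symm _ (((M.r₁.bddMeas_avg _).mul
    (M.bddMeas_token.comp measurable_snd)).integrable _)] at h
  simp only [integral_mul_const] at h
  change _ = -∫ x, M.token x * M.token x ∂M.μ₁ at h
  simp only [pow_two]
  linarith

lemma ae_var_eq_zero (M : SquareModel u Λ₁ Λ₂ Λ₃ Λ₄) :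
    ∀ᵐ q ∂(M.μ₄.prod M.μ₁), M.r₁.var q.1 q.2 = 0 := by
  filter_upwards [Measure.ae_ae_of_ae_prod M.ae_balanced] with q hq
  exact hq.exists.choose_spec.2

/-- The token function of a source takes only the values `1 / 2` and `-1 / 2`. -/
lemma ae_token_sq (M : SquareModel u Λ₁ Λ₂ Λ₃ Λ₄) (hu : u ^ 2 ≤ 1) :
    ∀ᵐ x ∂M.μ₁, M.token x ^ 2 = 1 / 4 := by
  refine ae_sq_eq_of_sub_pow_three (μ := M.μ₄) M.bddMeas_token
    M.rotate.rotate.rotate.bddMeas_token (M.integral_token hu)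
    (M.rotate.rotate.rotate.integral_token hu) (M.integral_token_sq hu)
    (M.rotate.rotate.rotate.integral_token_sq hu) ?_
  filter_upwards [M.ae_excess_eq hu, M.ae_var_eq_zero] with q h₁ h₂
  rw [← h₁]
  exact M.r₁.avg_excess_pow_three _ _ h₂

/-- The indicator of the event that all four token functions equal `-1 / 2`. -/
noncomputable def allLow (M : SquareModel u Λ₁ Λ₂ Λ₃ Λ₄) (ω : (Λ₄ × Λ₁) × (Λ₂ × Λ₃)) : ℝ :=
  (1 / 2 - M.rotate.rotate.rotate.token ω.1.1) * (1 / 2 - M.token ω.1.2) *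
    ((1 / 2 - M.rotate.token ω.2.1) * (1 / 2 - M.rotate.rotate.token ω.2.2))

lemma bddMeas_half_sub_token (M : SquareModel u Λ₁ Λ₂ Λ₃ Λ₄) :
    BddMeas fun x => 1 / 2 - M.token x :=
  (BddMeas.const _).sub M.bddMeas_token

lemma bddMeas_allLow (M : SquareModel u Λ₁ Λ₂ Λ₃ Λ₄) : BddMeas M.allLow :=
  ((M.rotate.rotate.rotate.bddMeas_half_sub_token.comp
      (φ := fun ω : (Λ₄ × Λ₁) × (Λ₂ × Λ₃) => ω.1.1) (by fun_prop)).mul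
    (M.bddMeas_half_sub_token.comp
      (φ := fun ω : (Λ₄ × Λ₁) × (Λ₂ × Λ₃) => ω.1.2) (by fun_prop))).mul
    ((M.rotate.bddMeas_half_sub_token.comp
      (φ := fun ω : (Λ₄ × Λ₁) × (Λ₂ × Λ₃) => ω.2.1) (by fun_prop)).mul
    (M.rotate.rotate.bddMeas_half_sub_token.comp
      (φ := fun ω : (Λ₄ × Λ₁) × (Λ₂ × Λ₃) => ω.2.2) (by fun_prop)))

lemma rotate_allLow (M : SquareModel u Λ₁ Λ₂ Λ₃ Λ₄) (ω : (Λ₄ × Λ₁) × (Λ₂ × Λ₃)) :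
    M.rotate.allLow (rotateVars ω) = M.allLow ω := by
  change (1 / 2 - M.token ω.1.2) * (1 / 2 - M.rotate.token ω.2.1) *
    ((1 / 2 - M.rotate.rotate.token ω.2.2) * (1 / 2 - M.rotate.rotate.rotate.token ω.1.1)) = _
  rw [allLow]
  ring

lemma integral_half_sub_token (M : SquareModel u Λ₁ Λ₂ Λ₃ Λ₄) (hu : u ^ 2 ≤ 1) :
    ∫ x, (1 / 2 - M.token x) ∂M.μ₁ = 1 / 2 := by
  rw [integral_sub (integrable_const _) (M.bddMeas_token.integrable _), M.integral_token hu]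
  simp

lemma integral_half_sub_mul_half_sub (M : SquareModel u Λ₁ Λ₂ Λ₃ Λ₄) (hu : u ^ 2 ≤ 1) :
    ∫ q, (1 / 2 - M.rotate.rotate.rotate.token q.1) * (1 / 2 - M.token q.2) ∂(M.μ₄.prod M.μ₁) =
      1 / 4 := by
  rw [integral_prod_mul (fun x => 1 / 2 - M.rotate.rotate.rotate.token x)
    (fun x => 1 / 2 - M.token x), M.integral_half_sub_token hu,
    show ∫ x, (1 / 2 - M.rotate.rotate.rotate.token x) ∂M.μ₄ = 1 / 2 from
      M.rotate.rotate.rotate.integral_half_sub_token hu]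
  norm_num

lemma integral_allLow (M : SquareModel u Λ₁ Λ₂ Λ₃ Λ₄) (hu : u ^ 2 ≤ 1) :
    ∫ ω, M.allLow ω ∂M.law = 1 / 16 := by
  simp only [allLow]
  rw [integral_prod_mul (fun q : Λ₄ × Λ₁ => (1 / 2 - M.rotate.rotate.rotate.token q.1) *
      (1 / 2 - M.token q.2)) (fun r : Λ₂ × Λ₃ => (1 / 2 - M.rotate.token r.1) *
      (1 / 2 - M.rotate.rotate.token r.2)), M.integral_half_sub_mul_half_sub hu,
    show ∫ r, (1 / 2 - M.rotate.token r.1) * (1 / 2 - M.rotate.rotate.token r.2)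
      ∂(M.μ₂.prod M.μ₃) = 1 / 4 from M.rotate.rotate.integral_half_sub_mul_half_sub hu]
  norm_num

lemma integral_half_sub_mul_prob (M : SquareModel u Λ₁ Λ₂ Λ₃ Λ₄) (hu : u ^ 2 ≤ 1) :
    ∫ q, (1 / 2 - M.rotate.rotate.rotate.token q.1) * (1 / 2 - M.token q.2) *
      M.r₁.prob (.one 1) q.1 q.2 ∂(M.μ₄.prod M.μ₁) = u ^ 2 / 4 := by
  have h₁ := M.pairCorr_eq_neg_integral hu fun a => if a = .one 1 then 1 else 0
  have h₂ := M.integral_avg fun a => if a = .one 1 then 1 else 0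
  simp only [pairCorr_one_excess u hu, pairCorr_one u hu, Response.avg_indicator] at h₁ h₂
  have h₃ : ∫ q, (1 / 2 * M.r₁.prob (.one 1) q.1 q.2 - M.r₁.prob (.one 1) q.1 q.2 * M.token q.2)
      ∂(M.μ₄.prod M.μ₁) = u ^ 2 / 4 := by
    rw [integral_sub (((M.r₁.bddMeas _).integrable _).const_mul _) (((M.r₁.bddMeas _).mul
      (M.bddMeas_token.comp measurable_snd)).integrable _), integral_const_mul, h₂]
    linarith
  rw [← h₃]
  refine integral_congr_ae ?_
  filter_upwards [M.ae_excess_eq hu, M.ae_var_eq_zero,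
    Measure.quasiMeasurePreserving_snd.ae (M.ae_token_sq hu),
    Measure.quasiMeasurePreserving_fst.ae
      (show ∀ᵐ x ∂M.μ₄, M.rotate.rotate.rotate.token x ^ 2 = 1 / 4 from
        M.rotate.rotate.rotate.ae_token_sq hu)] with q hD hv ht ht'
  have hs := M.r₁.prob_one_add_prob_one _ _ hv
  have hx := M.r₁.nonneg (.one 1) q.1 q.2
  have hz := M.r₁.nonneg (.one 0) q.1 q.2
  rw [hD] at hs
  generalize M.token q.2 = t at *
  generalize M.rotate.rotate.rotate.token q.1 = t' at *
  generalize M.r₁.prob (.one 1) q.1 q.2 = x at *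
  have e : (t - 1 / 2) * (t + 1 / 2) = 0 := by linear_combination ht
  have e' : (t' - 1 / 2) * (t' + 1 / 2) = 0 := by linear_combination ht'
  rcases mul_eq_zero.1 e with e | e <;> rcases mul_eq_zero.1 e' with e' | e'
  · obtain rfl : t = 1 / 2 := by linarith
    ring
  · obtain rfl : t = 1 / 2 := by linarith
    ring
  · obtain rfl : t = -1 / 2 := by linarith
    obtain rfl : t' = 1 / 2 := by linarith
    obtain rfl : x = 0 := by linarith
    ring
  · obtain rfl : t = -1 / 2 := by linarith
    obtain rfl : t' = -1 / 2 := by linarith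
    ring

lemma integral_allLow_mul_prob₁ (M : SquareModel u Λ₁ Λ₂ Λ₃ Λ₄) (hu : u ^ 2 ≤ 1) :
    ∫ ω, M.allLow ω * M.r₁.prob (.one 1) ω.1.1 ω.1.2 ∂M.law = u ^ 2 / 16 := by
  have h := integral_prod_mul (μ := M.μ₄.prod M.μ₁) (ν := M.μ₂.prod M.μ₃)
    (fun q : Λ₄ × Λ₁ => (1 / 2 - M.rotate.rotate.rotate.token q.1) *
      (1 / 2 - M.token q.2) * M.r₁.prob (.one 1) q.1 q.2) (fun r : Λ₂ × Λ₃ =>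
      (1 / 2 - M.rotate.token r.1) * (1 / 2 - M.rotate.rotate.token r.2))
  rw [M.integral_half_sub_mul_prob hu,
    show ∫ r, (1 / 2 - M.rotate.token r.1) * (1 / 2 - M.rotate.rotate.token r.2)
      ∂(M.μ₂.prod M.μ₃) = 1 / 4 from M.rotate.rotate.integral_half_sub_mul_half_sub hu] at h
  rw [show u ^ 2 / 16 = u ^ 2 / 4 * (1 / 4) by ring, ← h]
  refine integral_congr_ae (ae_of_all _ fun ω => ?_)
  simp only [allLow]
  ring

lemma integral_allLow_mul_prob₂ (M : SquareModel u Λ₁ Λ₂ Λ₃ Λ₄) (hu : u ^ 2 ≤ 1) :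
    ∫ ω, M.allLow ω * M.r₂.prob (.one 1) ω.1.2 ω.2.1 ∂M.law = u ^ 2 / 16 := by
  rw [← M.rotate.integral_allLow_mul_prob₁ hu]
  refine Eq.symm ((M.integral_rotateVars
    (M.rotate.bddMeas_allLow.mul (M.rotate.bddMeas₁ _)).measurable).trans ?_)
  simp only [rotate_allLow]
  rfl

lemma integral_allLow_mul_prob₃ (M : SquareModel u Λ₁ Λ₂ Λ₃ Λ₄) (hu : u ^ 2 ≤ 1) :
    ∫ ω, M.allLow ω * M.r₃.prob (.one 1) ω.2.1 ω.2.2 ∂M.law = u ^ 2 / 16 := by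
  rw [← M.rotate.integral_allLow_mul_prob₂ hu]
  refine Eq.symm ((M.integral_rotateVars
    (M.rotate.bddMeas_allLow.mul (M.rotate.bddMeas₂ _)).measurable).trans ?_)
  simp only [rotate_allLow]
  rfl

lemma integral_allLow_mul_prob₄ (M : SquareModel u Λ₁ Λ₂ Λ₃ Λ₄) (hu : u ^ 2 ≤ 1) :
    ∫ ω, M.allLow ω * M.r₄.prob (.one 1) ω.2.2 ω.1.1 ∂M.law = u ^ 2 / 16 := by
  rw [← M.rotate.integral_allLow_mul_prob₃ hu]
  refine Eq.symm ((M.integral_rotateVars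
    (M.rotate.bddMeas_allLow.mul (M.rotate.bddMeas₃ _)).measurable).trans ?_)
  simp only [rotate_allLow]
  rfl

/-- Given the two source tokens, the first party's single-token outcomes exhaust the probability
exactly when the tokens agree. -/
lemma ae_prob_one_add (M : SquareModel u Λ₁ Λ₂ Λ₃ Λ₄) (hu : u ^ 2 ≤ 1) :
    ∀ᵐ ω ∂M.law, M.token ω.1.2 ^ 2 = 1 / 4 ∧
      M.r₁.prob (.one 1) ω.1.1 ω.1.2 + M.r₁.prob (.one 0) ω.1.1 ω.1.2 =
        1 - (M.token ω.1.2 - M.rotate.rotate.rotate.token ω.1.1) ^ 2 := by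
  refine Measure.quasiMeasurePreserving_fst.ae (μb := M.μ₄.prod M.μ₁)
    (p := fun q => M.token q.2 ^ 2 = 1 / 4 ∧ M.r₁.prob (.one 1) q.1 q.2 +
      M.r₁.prob (.one 0) q.1 q.2 = 1 - (M.token q.2 - M.rotate.rotate.rotate.token q.1) ^ 2) ?_
  filter_upwards [M.ae_excess_eq hu, M.ae_var_eq_zero,
    Measure.quasiMeasurePreserving_snd.ae (M.ae_token_sq hu)] with q hD hv ht
  exact ⟨ht, by rw [M.r₁.prob_one_add_prob_one _ _ hv, hD]⟩

lemma ae_rotateVars (M : SquareModel u Λ₁ Λ₂ Λ₃ Λ₄) {p : (Λ₁ × Λ₂) × (Λ₃ × Λ₄) → Prop}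
    (h : ∀ᵐ ω ∂M.rotate.law, p ω) : ∀ᵐ ω ∂M.law, p (rotateVars ω) :=
  (measurePreserving_rotateVars M.μ₁ M.μ₂ M.μ₃ M.μ₄).quasiMeasurePreserving.ae h

/-- The pointwise polynomial whose expectation separates local models from the quantum value. -/
noncomputable def witness (M : SquareModel u Λ₁ Λ₂ Λ₃ Λ₄) (ω : (Λ₄ × Λ₁) × (Λ₂ × Λ₃)) : ℝ :=
  let p₁ := fun i => M.r₁.prob (.one i) ω.1.1 ω.1.2
  let p₂ := fun i => M.r₂.prob (.one i) ω.1.2 ω.2.1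
  let p₃ := fun i => M.r₃.prob (.one i) ω.2.1 ω.2.2
  let p₄ := fun i => M.r₄.prob (.one i) ω.2.2 ω.1.1
  p₁ 1 * p₂ 1 * p₃ 1 * p₄ 1 + (1 / 2) * (p₁ 1 * p₂ 1 * p₃ 1 * p₄ 0 + p₁ 1 * p₂ 1 * p₃ 0 * p₄ 1 +
    p₁ 1 * p₂ 0 * p₃ 1 * p₄ 1 + p₁ 0 * p₂ 1 * p₃ 1 * p₄ 1) + M.allLow ω -
    (1 / 2) * (M.allLow ω * (p₁ 1 + p₂ 1 + p₃ 1 + p₄ 1))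

/-- The witness evaluated on the conditional outcome probabilities is almost surely nonnegative. -/
lemma ae_witness_nonneg (M : SquareModel u Λ₁ Λ₂ Λ₃ Λ₄) (hu : u ^ 2 ≤ 1) :
    ∀ᵐ ω ∂M.law, 0 ≤ M.witness ω := by
  filter_upwards [M.ae_prob_one_add hu, M.ae_rotateVars (M.rotate.ae_prob_one_add hu),
    M.ae_rotateVars (M.rotate.ae_rotateVars (M.rotate.rotate.ae_prob_one_add hu)),
    M.ae_rotateVars (M.rotate.ae_rotateVars (M.rotate.rotate.ae_rotateVars
      (M.rotate.rotate.rotate.ae_prob_one_add hu)))] with ω h₁ h₂ h₃ h₄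
  exact witness_nonneg h₁.1 h₂.1 h₃.1 h₄.1 (M.r₁.nonneg _ _ _) (M.r₂.nonneg _ _ _)
    (M.r₃.nonneg _ _ _) (M.r₄.nonneg _ _ _) (M.r₁.nonneg _ _ _) (M.r₂.nonneg _ _ _)
    (M.r₃.nonneg _ _ _) (M.r₄.nonneg _ _ _) h₁.2 h₂.2 h₃.2 h₄.2

lemma integral_witness (M : SquareModel u Λ₁ Λ₂ Λ₃ Λ₄) (hu : u ^ 2 ≤ 1) :
    ∫ ω, M.witness ω ∂M.law = (1 - u ^ 2) ^ 2 * (1 - 2 * u ^ 4) / 8 := by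
  have hp := fun a₁ a₂ a₃ a₄ => (M.bddMeas_prod a₁ a₂ a₃ a₄).integrable M.law
  have hL := M.bddMeas_allLow.integrable M.law
  have hL₁ := (M.bddMeas_allLow.mul (M.bddMeas₁ (.one 1))).integrable M.law
  have hL₂ := (M.bddMeas_allLow.mul (M.bddMeas₂ (.one 1))).integrable M.law
  have hL₃ := (M.bddMeas_allLow.mul (M.bddMeas₃ (.one 1))).integrable M.law
  have hL₄ := (M.bddMeas_allLow.mul (M.bddMeas₄ (.one 1))).integrable M.law
  have c₁ := hp (.one 1) (.one 1) (.one 1) (.one 1)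
  have c₂ := hp (.one 1) (.one 1) (.one 1) (.one 0)
  have c₃ := hp (.one 1) (.one 1) (.one 0) (.one 1)
  have c₄ := hp (.one 1) (.one 0) (.one 1) (.one 1)
  have c₅ := hp (.one 0) (.one 1) (.one 1) (.one 1)
  simp only [witness, mul_add (M.allLow _)]
  rw [integral_sub, integral_add, integral_add c₁, integral_const_mul, integral_const_mul,
    integral_add, integral_add, integral_add c₂ c₃, integral_add, integral_add, integral_add hL₁ hL₂,
    M.integral_allLow hu, M.integral_allLow_mul_prob₁ hu, M.integral_allLow_mul_prob₂ hu,
    M.integral_allLow_mul_prob₃ hu, M.integral_allLow_mul_prob₄ hu]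
  · simp only [M.integral_eq]
    have e₁ := ringP_rotate u (.one 1) (.one 1) (.one 1) (.one 0)
    have e₂ := ringP_rotate u (.one 1) (.one 1) (.one 0) (.one 1)
    have e₃ := ringP_rotate u (.one 1) (.one 0) (.one 1) (.one 1)
    rw [e₃, e₂, e₁, ringP_one_one_one_one u hu, ringP_one_one_one_zero u hu]
    ring
  all_goals fun_prop

/-- No local model on the square reproduces the quantum distribution once `u ^ 4 > 1 / 2`. -/
lemma false_of_half_lt (M : SquareModel u Λ₁ Λ₂ Λ₃ Λ₄) (hu : u ^ 2 < 1) (hu' : 1 / 2 < u ^ 4) :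
    False := by
  have h := integral_nonneg_of_ae (M.ae_witness_nonneg hu.le)
  rw [M.integral_witness hu.le] at h
  have : 0 < (1 - u ^ 2) ^ 2 := pow_pos (by linarith) 2
  nlinarith

end SquareModel

/-- The expectation over the hidden variables of the square as an iterated integral. -/
lemma Response.integral_square {Λ₁ Λ₂ Λ₃ Λ₄ : Type} [MeasurableSpace Λ₁] [MeasurableSpace Λ₂]
    [MeasurableSpace Λ₃] [MeasurableSpace Λ₄] (r₁ : Response Λ₄ Λ₁) (r₂ : Response Λ₁ Λ₂)
    (r₃ : Response Λ₂ Λ₃) (r₄ : Response Λ₃ Λ₄) (μ₁ : Measure Λ₁) (μ₂ : Measure Λ₂)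
    (μ₃ : Measure Λ₃) (μ₄ : Measure Λ₄) [IsProbabilityMeasure μ₁] [IsProbabilityMeasure μ₂]
    [IsProbabilityMeasure μ₃] [IsProbabilityMeasure μ₄] (a₁ a₂ a₃ a₄ : Outc) :
    ∫ ω, r₁.prob a₁ ω.1.1 ω.1.2 * r₂.prob a₂ ω.1.2 ω.2.1 * r₃.prob a₃ ω.2.1 ω.2.2 *
      r₄.prob a₄ ω.2.2 ω.1.1 ∂((μ₄.prod μ₁).prod (μ₂.prod μ₃)) =
    ∫ x₁, ∫ x₂, ∫ x₃, ∫ x₄, r₁.prob a₁ x₄ x₁ * r₂.prob a₂ x₁ x₂ * r₃.prob a₃ x₂ x₃ *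
      r₄.prob a₄ x₃ x₄ ∂μ₄ ∂μ₃ ∂μ₂ ∂μ₁ := by
  have hb : BddMeas fun ω : (Λ₁ × Λ₂) × (Λ₃ × Λ₄) => r₁.prob a₁ ω.2.2 ω.1.1 *
      r₂.prob a₂ ω.1.1 ω.1.2 * r₃.prob a₃ ω.1.2 ω.2.1 * r₄.prob a₄ ω.2.1 ω.2.2 :=
    ((((r₁.bddMeas a₁).comp
      (φ := fun ω : (Λ₁ × Λ₂) × (Λ₃ × Λ₄) => (ω.2.2, ω.1.1)) (by fun_prop)).mul
      ((r₂.bddMeas a₂).comp measurable_fst)).mul ((r₃.bddMeas a₃).comp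
      (φ := fun ω : (Λ₁ × Λ₂) × (Λ₃ × Λ₄) => (ω.1.2, ω.2.1)) (by fun_prop))).mul
      ((r₄.bddMeas a₄).comp measurable_snd)
  have hp := measurePreserving_rotateVars μ₁ μ₂ μ₃ μ₄
  have h := integral_map (μ := (μ₄.prod μ₁).prod (μ₂.prod μ₃)) hp.measurable.aemeasurable
    hb.measurable.aestronglyMeasurable
  rw [hp.map_eq] at h
  refine h.symm.trans ?_
  have hi := hb.integrable ((μ₁.prod μ₂).prod (μ₃.prod μ₄))
  rw [integral_prod _ hi, integral_prod _ hi.integral_prod_left]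
  refine integral_congr_ae (ae_of_all _ fun x₁ => integral_congr_ae (ae_of_all _ fun x₂ => ?_))
  exact integral_prod _ ((hb.comp
    (φ := fun r : Λ₃ × Λ₄ => ((x₁, x₂), r)) (by fun_prop)).integrable _)

/-- For every real `u` with `0.841 < u < 1`, the square-network quantum
distribution `P_Q^□` is nonlocal on the square network: no local model with four
independent sources (one per edge of the square) reproduces it. -/
theorem stmt_0 (u : ℝ) (hu : (0.841 : ℝ) < u) (hu1 : u < 1) :
    ¬ ∃ (Λ₁ Λ₂ Λ₃ Λ₄ : Type)
        (m₁ : MeasurableSpace Λ₁) (m₂ : MeasurableSpace Λ₂)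
        (m₃ : MeasurableSpace Λ₃) (m₄ : MeasurableSpace Λ₄)
        (μ₁ : @Measure Λ₁ m₁) (μ₂ : @Measure Λ₂ m₂)
        (μ₃ : @Measure Λ₃ m₃) (μ₄ : @Measure Λ₄ m₄)
        (p₁ : Outc → Λ₄ → Λ₁ → ℝ) (p₂ : Outc → Λ₁ → Λ₂ → ℝ)
        (p₃ : Outc → Λ₂ → Λ₃ → ℝ) (p₄ : Outc → Λ₃ → Λ₄ → ℝ),
      IsProbabilityMeasure μ₁ ∧ IsProbabilityMeasure μ₂ ∧
      IsProbabilityMeasure μ₃ ∧ IsProbabilityMeasure μ₄ ∧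
      (∀ a, @Measurable _ _ (m₄.prod m₁) _ fun q : Λ₄ × Λ₁ => p₁ a q.1 q.2) ∧
      (∀ a, @Measurable _ _ (m₁.prod m₂) _ fun q : Λ₁ × Λ₂ => p₂ a q.1 q.2) ∧
      (∀ a, @Measurable _ _ (m₂.prod m₃) _ fun q : Λ₂ × Λ₃ => p₃ a q.1 q.2) ∧
      (∀ a, @Measurable _ _ (m₃.prod m₄) _ fun q : Λ₃ × Λ₄ => p₄ a q.1 q.2) ∧
      (∀ x y, (∀ a, 0 ≤ p₁ a x y) ∧ ∑ a, p₁ a x y = 1) ∧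
      (∀ x y, (∀ a, 0 ≤ p₂ a x y) ∧ ∑ a, p₂ a x y = 1) ∧
      (∀ x y, (∀ a, 0 ≤ p₃ a x y) ∧ ∑ a, p₃ a x y = 1) ∧
      (∀ x y, (∀ a, 0 ≤ p₄ a x y) ∧ ∑ a, p₄ a x y = 1) ∧
      (∀ a₁ a₂ a₃ a₄ : Outc,
        ringP 4 u ![a₁, a₂, a₃, a₄] =
          ∫ x₁, ∫ x₂, ∫ x₃, ∫ x₄,
            p₁ a₁ x₄ x₁ * p₂ a₂ x₁ x₂ * p₃ a₃ x₂ x₃ * p₄ a₄ x₃ x₄ ∂μ₄ ∂μ₃ ∂μ₂ ∂μ₁) := by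
  rintro ⟨Λ₁, Λ₂, Λ₃, Λ₄, m₁, m₂, m₃, m₄, μ₁, μ₂, μ₃, μ₄, p₁, p₂, p₃, p₄, i₁, i₂, i₃, i₄,
    hm₁, hm₂, hm₃, hm₄, h₁, h₂, h₃, h₄, h⟩
  let r₁ : Response Λ₄ Λ₁ := ⟨p₁, hm₁, fun a x y => (h₁ x y).1 a, fun x y => (h₁ x y).2⟩
  let r₂ : Response Λ₁ Λ₂ := ⟨p₂, hm₂, fun a x y => (h₂ x y).1 a, fun x y => (h₂ x y).2⟩
  let r₃ : Response Λ₂ Λ₃ := ⟨p₃, hm₃, fun a x y => (h₃ x y).1 a, fun x y => (h₃ x y).2⟩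
  let r₄ : Response Λ₃ Λ₄ := ⟨p₄, hm₄, fun a x y => (h₄ x y).1 a, fun x y => (h₄ x y).2⟩
  have hM : ∀ a₁ a₂ a₃ a₄, ∫ ω, r₁.prob a₁ ω.1.1 ω.1.2 * r₂.prob a₂ ω.1.2 ω.2.1 *
      r₃.prob a₃ ω.2.1 ω.2.2 * r₄.prob a₄ ω.2.2 ω.1.1 ∂((μ₄.prod μ₁).prod (μ₂.prod μ₃)) =
      ringP 4 u ![a₁, a₂, a₃, a₄] := fun a₁ a₂ a₃ a₄ =>
    (r₁.integral_square r₂ r₃ r₄ μ₁ μ₂ μ₃ μ₄ a₁ a₂ a₃ a₄).trans (h a₁ a₂ a₃ a₄).symm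
  refine SquareModel.false_of_half_lt
    ⟨μ₁, μ₂, μ₃, μ₄, i₁, i₂, i₃, i₄, r₁, r₂, r₃, r₄, hM⟩ (by nlinarith) ?_
  have : (0.841 : ℝ) ^ 4 < u ^ 4 := pow_lt_pow_left₀ hu (by norm_num) (by norm_num)
  norm_num at this ⊢
  linarith
end

section
/- For every real u with 0.841 < u < 1, the square-network quantum distribution P_Q^□ is nonlocal on the triangle network obtained by merging parties A₂ and A₃ into a single party M: there do not exist types Λ₁, Λ₂, Λ₃ with probability distributions μ₁, μ₂, μ₃ and response kernels p_B(a₁|λ₁,λ₃), p_M(a₂,a₃|λ₁,λ₂), p_C(a₄|λ₂,λ₃) (each a_j in {0, 1₀, 1₁, 2}, with the merged party outputting the pair (a₂,a₃) jointly) such that P_Q^□(a₁,a₂,a₃,a₄) equals the expectation over independently sampled λ₁, λ₂, λ₃ of the product p_B(a₁|λ₁,λ₃)·p_M(a₂,a₃|λ₁,λ₂)·p_C(a₄|λ₂,λ₃), for all outcomes. -/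
open MeasureTheory

/-- The number of tokens (excited qubits) announced by an outcome. -/
def Outc.tokens : Outc → ℕ
  | Outc.zero => 0
  | Outc.one _ => 1
  | Outc.two => 2

theorem Outc.sum_eq_s2 {M : Type*} [AddCommMonoid M] (f : Outc → M) :
    ∑ a, f a = f Outc.zero + f (Outc.one 0) + f (Outc.one 1) + f Outc.two := by
  have h : (Finset.univ : Finset Outc) =
      {Outc.zero, Outc.one 0, Outc.one 1, Outc.two} := by decide
  rw [h, Finset.sum_insert (by decide), Finset.sum_insert (by decide),
    Finset.sum_insert (by decide), Finset.sum_singleton]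
  simp only [add_assoc]

theorem sum_fin_four_fun_s2 {ι M : Type*} [Fintype ι] [AddCommMonoid M] (f : (Fin 4 → ι) → M) :
    ∑ x, f x = ∑ a, ∑ b, ∑ c, ∑ d, f ![a, b, c, d] := by
  have step : ∀ (n : ℕ) (g : (Fin (n + 1) → ι) → M),
      ∑ x, g x = ∑ a, ∑ y : Fin n → ι, g (Matrix.vecCons a y) := by
    intro n g
    rw [← (Fin.consEquiv fun _ => ι).sum_comp, Fintype.sum_prod_type]
    rfl
  simp only [step, Fintype.sum_unique]
  rfl

theorem ringAmp_four_s2 (u : ℝ) (a b c d : Outc) :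
    ringAmp 4 u ![a, b, c, d] = (∑ p : Fin 2, ∑ q : Fin 2, ∑ r : Fin 2, ∑ s : Fin 2,
      basisVec u a (1 - s) p * basisVec u b (1 - p) q * basisVec u c (1 - q) r *
        basisVec u d (1 - r) s) / 4 := by
  have h2 : (√2 : ℝ)⁻¹ * (√2)⁻¹ = 1 / 2 := by
    rw [← mul_inv, Real.mul_self_sqrt (by norm_num)]; norm_num
  have hpsi : ∀ i j, psiPlus i j = (√2)⁻¹ * if j = 1 - i then 1 else 0 := by
    intro i j; fin_cases i <;> fin_cases j <;> simp [psiPlus]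
  have hprod : ∀ L R : Fin 4 → Fin 2, ∏ k, psiPlus (R k) (L (finNext k)) =
      (1 / 4) * ((if L 1 = 1 - R 0 then 1 else 0) * (if L 2 = 1 - R 1 then 1 else 0) *
        (if L 3 = 1 - R 2 then 1 else 0) * (if L 0 = 1 - R 3 then 1 else 0)) := by
    intro L R
    have h4 : (√2 : ℝ)⁻¹ * (√2)⁻¹ * ((√2)⁻¹ * (√2)⁻¹) = 1 / 4 := by rw [h2]; norm_num
    rw [← h4, Fin.prod_univ_four]
    have e0 : finNext (0 : Fin 4) = 1 := rfl
    have e1 : finNext (1 : Fin 4) = 2 := rfl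
    have e2 : finNext (2 : Fin 4) = 3 := rfl
    have e3 : finNext (3 : Fin 4) = 0 := rfl
    simp only [e0, e1, e2, e3, hpsi]
    ring
  unfold ringAmp
  rw [Finset.sum_comm, sum_fin_four_fun_s2]
  simp only [hprod, sum_fin_four_fun_s2, Finset.sum_div]
  refine Finset.sum_congr rfl fun p _ => Finset.sum_congr rfl fun q _ =>
    Finset.sum_congr rfl fun r _ => Finset.sum_congr rfl fun s _ => ?_
  fin_cases p <;> fin_cases q <;> fin_cases r <;> fin_cases s <;>
    simp [Fin.prod_univ_four] <;> ring

theorem ringP_four (u : ℝ) (a b c d : Outc) :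
    ringP 4 u ![a, b, c, d] = (∑ p : Fin 2, ∑ q : Fin 2, ∑ r : Fin 2, ∑ s : Fin 2,
      basisVec u a (1 - s) p * basisVec u b (1 - p) q * basisVec u c (1 - q) r *
        basisVec u d (1 - r) s) ^ 2 / 16 := by
  rw [ringP, ringAmp_four_s2, div_pow]; norm_num

theorem ringP_four_eq_zero (u : ℝ) {a b c d : Outc}
    (h : a.tokens + b.tokens + c.tokens + d.tokens ≠ 4 ∨ b.tokens + c.tokens = 0 ∨
      b.tokens + c.tokens = 4) : ringP 4 u ![a, b, c, d] = 0 := by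
  rw [ringP_four]
  revert h
  rcases a with _ | _ | _ <;> rcases b with _ | _ | _ <;> rcases c with _ | _ | _ <;>
    rcases d with _ | _ | _ <;> simp [Outc.tokens, basisVec, Fin.sum_univ_two]

theorem ringP_ones (u : ℝ) (i j k l : Fin 2) :
    ringP 4 u ![Outc.one i, Outc.one j, Outc.one k, Outc.one l] =
      (uco u i * uco u j * uco u k * uco u l + vco u i * vco u j * vco u k * vco u l) ^ 2 / 16 := by
  simp [ringP_four, basisVec, Fin.sum_univ_two]; ring

theorem ringP_one_two_zero_one (u : ℝ) (i l : Fin 2) :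
    ringP 4 u ![Outc.one i, Outc.two, Outc.zero, Outc.one l] =
      vco u i ^ 2 * vco u l ^ 2 / 16 := by
  simp [ringP_four, basisVec, Fin.sum_univ_two]; ring

theorem sum_ringP_zero_first {u : ℝ} (hu : u ^ 2 ≤ 1) :
    ∑ a₂, ∑ a₃, ∑ a₄, ringP 4 u ![Outc.zero, a₂, a₃, a₄] = 1 / 4 := by
  have h := Real.sq_sqrt (sub_nonneg.2 hu)
  simp [ringP_four, basisVec, Fin.sum_univ_two, Outc.sum_eq_s2, uco, vco]
  linear_combination (3 * (u ^ 2 + √(1 - u ^ 2) ^ 2 + 1) / 16) * h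

theorem sum_ringP_zero_last {u : ℝ} (hu : u ^ 2 ≤ 1) :
    ∑ a₁, ∑ a₂, ∑ a₃, ringP 4 u ![a₁, a₂, a₃, Outc.zero] = 1 / 4 := by
  have h := Real.sq_sqrt (sub_nonneg.2 hu)
  simp [ringP_four, basisVec, Fin.sum_univ_two, Outc.sum_eq_s2, uco, vco]
  linear_combination (3 * (u ^ 2 + √(1 - u ^ 2) ^ 2 + 1) / 16) * h

theorem sum_ringP_middle {u : ℝ} (hu : u ^ 2 ≤ 1) :
    ∑ a₂, ∑ a₃, (if a₂.tokens + a₃.tokens = 1 then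
      ∑ a₁, ∑ a₄, ringP 4 u ![a₁, a₂, a₃, a₄] else 0) = 1 / 4 := by
  have h := Real.sq_sqrt (sub_nonneg.2 hu)
  simp [ringP_four, basisVec, Fin.sum_univ_two, Outc.sum_eq_s2, uco, vco, Outc.tokens]
  linear_combination ((u ^ 2 + √(1 - u ^ 2) ^ 2 + 1) / 4) * h

theorem sum_ringP_one_zero {u : ℝ} (hu : u ^ 2 ≤ 1) (i : Fin 2) :
    ∑ a₂, ∑ a₃, ringP 4 u ![Outc.one i, a₂, a₃, Outc.zero] = vco u i ^ 2 / 8 := by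
  have h := Real.sq_sqrt (sub_nonneg.2 hu)
  simp [ringP_four, basisVec, Fin.sum_univ_two, Outc.sum_eq_s2, uco, vco]
  linear_combination (![√(1 - u ^ 2), -u] i ^ 2 / 8) * h

theorem sum_ringP_middle_one {u : ℝ} (hu : u ^ 2 ≤ 1) (l : Fin 2) :
    ∑ a₂, ∑ a₃, (if a₂.tokens + a₃.tokens = 1 then
      ∑ a₁, ringP 4 u ![a₁, a₂, a₃, Outc.one l] else 0) = vco u l ^ 2 / 8 := by
  have h := Real.sq_sqrt (sub_nonneg.2 hu)
  simp [ringP_four, basisVec, Fin.sum_univ_two, Outc.sum_eq_s2, uco, vco, Outc.tokens]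
  linear_combination (![√(1 - u ^ 2), -u] l ^ 2 / 8) * h

theorem sum_ringP_zero_ones (u : ℝ) (j k : Fin 2) :
    ∑ a₄, ringP 4 u ![Outc.zero, Outc.one j, Outc.one k, a₄] =
      vco u j ^ 2 * vco u k ^ 2 / 16 := by
  simp [ringP_four, basisVec, Fin.sum_univ_two, Outc.sum_eq_s2]; ring

theorem sum_ringP_zero_zero_two (u : ℝ) :
    ∑ a₄, ringP 4 u ![Outc.zero, Outc.zero, Outc.two, a₄] = 0 := by
  simp [ringP_four, basisVec, Fin.sum_univ_two]

/-- A finite model of the triangle network with outcome distribution `P`: each source `λₖ` is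
coarse-grained to a bit `sₖ`, the direction in which it sends its token (`true` for clockwise).
`W` is the joint law of outcomes and bits, `tₖ` the law of the bit `sₖ`, and `GB`, `GM`, `GC` the
joint laws of the outcome of a party and the two bits it sees. -/
structure TokenModel (P : Outc → Outc → Outc → Outc → ℝ) where
  W : Outc → Outc → Outc → Outc → Bool → Bool → Bool → ℝ
  t₁ : Bool → ℝ
  t₂ : Bool → ℝ
  t₃ : Bool → ℝ
  GB : Outc → Bool → Bool → ℝ
  GM : Outc → Outc → Bool → Bool → ℝ
  GC : Outc → Bool → Bool → ℝ
  W_nonneg : ∀ a₁ a₂ a₃ a₄ s₁ s₂ s₃, 0 ≤ W a₁ a₂ a₃ a₄ s₁ s₂ s₃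
  sum_W : ∀ a₁ a₂ a₃ a₄, ∑ s₁, ∑ s₂, ∑ s₃, W a₁ a₂ a₃ a₄ s₁ s₂ s₃ = P a₁ a₂ a₃ a₄
  t₁_nonneg : ∀ s, 0 ≤ t₁ s
  t₂_nonneg : ∀ s, 0 ≤ t₂ s
  t₃_nonneg : ∀ s, 0 ≤ t₃ s
  sum_t₁ : t₁ true + t₁ false = 1
  sum_t₂ : t₂ true + t₂ false = 1
  sum_t₃ : t₃ true + t₃ false = 1
  GB_nonneg : ∀ a s₁ s₃, 0 ≤ GB a s₁ s₃
  GM_nonneg : ∀ a a' s₁ s₂, 0 ≤ GM a a' s₁ s₂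
  GC_nonneg : ∀ a s₂ s₃, 0 ≤ GC a s₂ s₃
  sum_W_B : ∀ a₁ s₁ s₂ s₃,
    ∑ a₂, ∑ a₃, ∑ a₄, W a₁ a₂ a₃ a₄ s₁ s₂ s₃ = t₂ s₂ * GB a₁ s₁ s₃
  sum_W_M : ∀ a₂ a₃ s₁ s₂ s₃,
    ∑ a₁, ∑ a₄, W a₁ a₂ a₃ a₄ s₁ s₂ s₃ = t₃ s₃ * GM a₂ a₃ s₁ s₂
  sum_W_C : ∀ a₄ s₁ s₂ s₃,
    ∑ a₁, ∑ a₂, ∑ a₃, W a₁ a₂ a₃ a₄ s₁ s₂ s₃ = t₁ s₁ * GC a₄ s₂ s₃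
  sum_GB : ∀ s₁ s₃, ∑ a, GB a s₁ s₃ = t₁ s₁ * t₃ s₃
  sum_GM : ∀ s₁ s₂, ∑ a, ∑ a', GM a a' s₁ s₂ = t₁ s₁ * t₂ s₂
  sum_GC : ∀ s₂ s₃, ∑ a, GC a s₂ s₃ = t₂ s₂ * t₃ s₃
  GB_false : ∀ s₃, GB Outc.zero false s₃ = 0
  GB_true : ∀ s₁, GB Outc.zero s₁ true = 0
  GM_true : ∀ a a' s₂, a.tokens + a'.tokens = 1 → GM a a' true s₂ = 0
  GM_false : ∀ a a' s₁, a.tokens + a'.tokens = 1 → GM a a' s₁ false = 0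
  GC_true : ∀ s₃, GC Outc.zero true s₃ = 0
  GC_false : ∀ s₂, GC Outc.zero s₂ false = 0

namespace TokenModel

variable {P : Outc → Outc → Outc → Outc → ℝ} (D : TokenModel P)

theorem W_le (a₁ a₂ a₃ a₄ : Outc) (s₁ s₂ s₃ : Bool) :
    D.W a₁ a₂ a₃ a₄ s₁ s₂ s₃ ≤ P a₁ a₂ a₃ a₄ := by
  rw [← D.sum_W]
  have h := D.W_nonneg a₁ a₂ a₃ a₄
  simp only [Fintype.sum_bool]
  cases s₁ <;> cases s₂ <;> cases s₃ <;>
    linarith [h true true true, h true true false, h true false true, h true false false,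
      h false true true, h false true false, h false false true, h false false false]

theorem W_eq_zero_of_P {a₁ a₂ a₃ a₄ : Outc} (h : P a₁ a₂ a₃ a₄ = 0) (s₁ s₂ s₃ : Bool) :
    D.W a₁ a₂ a₃ a₄ s₁ s₂ s₃ = 0 :=
  le_antisymm (h ▸ D.W_le a₁ a₂ a₃ a₄ s₁ s₂ s₃) (D.W_nonneg ..)

theorem W_eq_zero_of_GB {a₁ : Outc} {s₁ s₃ : Bool} (h : D.GB a₁ s₁ s₃ = 0)
    (a₂ a₃ a₄ : Outc) (s₂ : Bool) : D.W a₁ a₂ a₃ a₄ s₁ s₂ s₃ = 0 := by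
  have h0 := D.sum_W_B a₁ s₁ s₂ s₃
  rw [h, mul_zero] at h0
  have n := D.W_nonneg
  have h1 := (Finset.sum_eq_zero_iff_of_nonneg fun _ _ => Finset.sum_nonneg fun _ _ =>
    Finset.sum_nonneg fun _ _ => n ..).1 h0 a₂ (Finset.mem_univ _)
  have h2 := (Finset.sum_eq_zero_iff_of_nonneg fun _ _ =>
    Finset.sum_nonneg fun _ _ => n ..).1 h1 a₃ (Finset.mem_univ _)
  exact (Finset.sum_eq_zero_iff_of_nonneg fun _ _ => n ..).1 h2 a₄ (Finset.mem_univ _)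

theorem W_eq_zero_of_GM {a₂ a₃ : Outc} {s₁ s₂ : Bool} (h : D.GM a₂ a₃ s₁ s₂ = 0)
    (a₁ a₄ : Outc) (s₃ : Bool) : D.W a₁ a₂ a₃ a₄ s₁ s₂ s₃ = 0 := by
  have h0 := D.sum_W_M a₂ a₃ s₁ s₂ s₃
  rw [h, mul_zero] at h0
  have n := D.W_nonneg
  have h1 := (Finset.sum_eq_zero_iff_of_nonneg fun _ _ =>
    Finset.sum_nonneg fun _ _ => n ..).1 h0 a₁ (Finset.mem_univ _)
  exact (Finset.sum_eq_zero_iff_of_nonneg fun _ _ => n ..).1 h1 a₄ (Finset.mem_univ _)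

theorem W_eq_zero_of_GC {a₄ : Outc} {s₂ s₃ : Bool} (h : D.GC a₄ s₂ s₃ = 0)
    (a₁ a₂ a₃ : Outc) (s₁ : Bool) : D.W a₁ a₂ a₃ a₄ s₁ s₂ s₃ = 0 := by
  have h0 := D.sum_W_C a₄ s₁ s₂ s₃
  rw [h, mul_zero] at h0
  have n := D.W_nonneg
  have h1 := (Finset.sum_eq_zero_iff_of_nonneg fun _ _ => Finset.sum_nonneg fun _ _ =>
    Finset.sum_nonneg fun _ _ => n ..).1 h0 a₁ (Finset.mem_univ _)
  have h2 := (Finset.sum_eq_zero_iff_of_nonneg fun _ _ =>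
    Finset.sum_nonneg fun _ _ => n ..).1 h1 a₂ (Finset.mem_univ _)
  exact (Finset.sum_eq_zero_iff_of_nonneg fun _ _ => n ..).1 h2 a₃ (Finset.mem_univ _)

theorem sum_P_B (a₁ : Outc) : ∑ a₂, ∑ a₃, ∑ a₄, P a₁ a₂ a₃ a₄ =
    D.GB a₁ true true + D.GB a₁ true false + D.GB a₁ false true + D.GB a₁ false false := by
  have h := D.sum_W_B a₁
  simp only [← D.sum_W, Fintype.sum_bool, Finset.sum_add_distrib, h]
  linear_combination (D.GB a₁ true true + D.GB a₁ true false + D.GB a₁ false true +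
    D.GB a₁ false false) * D.sum_t₂

theorem sum_P_M (a₂ a₃ : Outc) : ∑ a₁, ∑ a₄, P a₁ a₂ a₃ a₄ =
    D.GM a₂ a₃ true true + D.GM a₂ a₃ true false + D.GM a₂ a₃ false true +
      D.GM a₂ a₃ false false := by
  have h := D.sum_W_M a₂ a₃
  simp only [← D.sum_W, Fintype.sum_bool, Finset.sum_add_distrib, h]
  linear_combination (D.GM a₂ a₃ true true + D.GM a₂ a₃ true false + D.GM a₂ a₃ false true +
    D.GM a₂ a₃ false false) * D.sum_t₃

theorem sum_P_C (a₄ : Outc) : ∑ a₁, ∑ a₂, ∑ a₃, P a₁ a₂ a₃ a₄ =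
    D.GC a₄ true true + D.GC a₄ true false + D.GC a₄ false true + D.GC a₄ false false := by
  have h := D.sum_W_C a₄
  simp only [← D.sum_W, Fintype.sum_bool, Finset.sum_add_distrib, h]
  linear_combination (D.GC a₄ true true + D.GC a₄ true false + D.GC a₄ false true +
    D.GC a₄ false false) * D.sum_t₁

end TokenModel

namespace TokenModel

variable {u : ℝ} (D : TokenModel fun a b c d => ringP 4 u ![a, b, c, d])

theorem GB_zero (hu : u ^ 2 ≤ 1) : D.GB Outc.zero true false = 1 / 4 := by
  have h := D.sum_P_B Outc.zero
  rw [sum_ringP_zero_first hu, D.GB_true, D.GB_true, D.GB_false] at h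
  linarith

theorem GC_zero (hu : u ^ 2 ≤ 1) : D.GC Outc.zero false true = 1 / 4 := by
  have h := D.sum_P_C Outc.zero
  rw [sum_ringP_zero_last hu, D.GC_true, D.GC_true, D.GC_false] at h
  linarith

theorem sum_GM_light (hu : u ^ 2 ≤ 1) :
    ∑ a, ∑ a', (if a.tokens + a'.tokens = 1 then D.GM a a' false true else 0) = 1 / 4 := by
  rw [← sum_ringP_middle hu]
  refine Finset.sum_congr rfl fun a _ => Finset.sum_congr rfl fun a' _ => ?_
  split_ifs with h
  · have := D.sum_P_M a a'
    rw [D.GM_true _ _ _ h, D.GM_true _ _ _ h, D.GM_false _ _ _ h] at this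
    linarith
  · rfl

/-- Each source sends its token in either direction with probability `1 / 2`. -/
theorem t_true (hu : u ^ 2 ≤ 1) :
    D.t₁ true = 1 / 2 ∧ D.t₂ true = 1 / 2 ∧ D.t₃ true = 1 / 2 := by
  have hB : 1 / 4 ≤ D.t₁ true * D.t₃ false := by
    rw [← D.GB_zero hu, ← D.sum_GB]
    exact Finset.single_le_sum (f := fun a => D.GB a true false)
      (fun a _ => D.GB_nonneg a _ _) (Finset.mem_univ _)
  have hC : 1 / 4 ≤ D.t₂ false * D.t₃ true := by
    rw [← D.GC_zero hu, ← D.sum_GC]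
    exact Finset.single_le_sum (f := fun a => D.GC a false true)
      (fun a _ => D.GC_nonneg a _ _) (Finset.mem_univ _)
  have hM : 1 / 4 ≤ D.t₁ false * D.t₂ true := by
    rw [← D.sum_GM_light hu, ← D.sum_GM]
    refine Finset.sum_le_sum fun a _ => Finset.sum_le_sum fun a' _ => ?_
    split_ifs
    exacts [le_rfl, D.GM_nonneg ..]
  have e1 : D.t₁ false = 1 - D.t₁ true := by linarith [D.sum_t₁]
  have e2 : D.t₂ false = 1 - D.t₂ true := by linarith [D.sum_t₂]
  have e3 : D.t₃ false = 1 - D.t₃ true := by linarith [D.sum_t₃]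
  have n₁ := D.t₁_nonneg true
  have n₂ := D.t₂_nonneg true
  have n₃ := D.t₃_nonneg true
  have n₁' := D.t₁_nonneg false
  have n₂' := D.t₂_nonneg false
  have n₃' := D.t₃_nonneg false
  rw [e3] at hB n₃'
  rw [e2] at hC n₂'
  rw [e1] at hM n₁'
  generalize D.t₁ true = x at *
  generalize D.t₂ true = y at *
  generalize D.t₃ true = z at *
  have key : ∀ {p q : ℝ}, 0 ≤ p → 0 ≤ 1 - q → 1 / 4 ≤ p * (1 - q) → q ≤ p := by
    intro p q hp hq h
    nlinarith [sq_nonneg (p - (1 - q))]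
  have h₁ := key n₁ n₃' hB
  have h₂ := key n₂ n₁' (by linarith)
  have h₃ := key n₃ n₂' (by linarith)
  have hxy : x = y := by linarith
  have hxz : x = z := by linarith
  subst hxy hxz
  have : x = 1 / 2 := by nlinarith [sq_nonneg (x - 1 / 2)]
  exact ⟨this, this, this⟩

theorem t_eq (hu : u ^ 2 ≤ 1) (s : Bool) :
    D.t₁ s = 1 / 2 ∧ D.t₂ s = 1 / 2 ∧ D.t₃ s = 1 / 2 := by
  obtain ⟨h₁, h₂, h₃⟩ := D.t_true hu
  cases s
  · exact ⟨by linarith [D.sum_t₁], by linarith [D.sum_t₂], by linarith [D.sum_t₃]⟩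
  · exact ⟨h₁, h₂, h₃⟩

theorem GB_eq_zero (hu : u ^ 2 ≤ 1) {a : Outc} (ha : a ≠ Outc.zero) :
    D.GB a true false = 0 := by
  have h := D.sum_GB true false
  rw [(D.t_eq hu true).1, (D.t_eq hu false).2.2, Outc.sum_eq_s2, D.GB_zero hu] at h
  have n := fun a => D.GB_nonneg a true false
  rcases a with _ | i | _
  · exact absurd rfl ha
  · fin_cases i <;> simp <;> linarith [n (Outc.one 0), n (Outc.one 1), n Outc.two]
  · linarith [n (Outc.one 0), n (Outc.one 1), n Outc.two]

theorem GC_eq_zero (hu : u ^ 2 ≤ 1) {a : Outc} (ha : a ≠ Outc.zero) :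
    D.GC a false true = 0 := by
  have h := D.sum_GC false true
  rw [(D.t_eq hu false).2.1, (D.t_eq hu true).2.2, Outc.sum_eq_s2, D.GC_zero hu] at h
  have n := fun a => D.GC_nonneg a false true
  rcases a with _ | i | _
  · exact absurd rfl ha
  · fin_cases i <;> simp <;> linarith [n (Outc.one 0), n (Outc.one 1), n Outc.two]
  · linarith [n (Outc.one 0), n (Outc.one 1), n Outc.two]

theorem GM_eq_zero (hu : u ^ 2 ≤ 1) {a a' : Outc} (ha : a.tokens + a'.tokens ≠ 1) :
    D.GM a a' false true = 0 := by
  have h := D.sum_GM false true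
  rw [(D.t_eq hu false).1, (D.t_eq hu true).2.1] at h
  have h' : ∑ a, ∑ a', (if a.tokens + a'.tokens = 1 then 0 else D.GM a a' false true) = 0 := by
    have e : ∀ a a', (if a.tokens + a'.tokens = 1 then 0 else D.GM a a' false true) =
        D.GM a a' false true -
          (if a.tokens + a'.tokens = 1 then D.GM a a' false true else 0) := by
      intro a a'; split_ifs <;> simp
    simp only [e, Finset.sum_sub_distrib, h, D.sum_GM_light hu]
    norm_num
  have n : ∀ a a', 0 ≤ (if a.tokens + a'.tokens = 1 then 0 else D.GM a a' false true) := by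
    intro a a'; split_ifs
    exacts [le_rfl, D.GM_nonneg ..]
  have h1 := (Finset.sum_eq_zero_iff_of_nonneg fun _ _ => Finset.sum_nonneg fun _ _ => n ..).1 h'
    a (Finset.mem_univ _)
  have h2 := (Finset.sum_eq_zero_iff_of_nonneg fun _ _ => n ..).1 h1 a' (Finset.mem_univ _)
  rwa [if_neg ha] at h2

/-- When all tokens travel clockwise, every party of the triangle receives exactly one. -/
theorem W_true_eq_zero {a₁ a₂ a₃ a₄ : Outc}
    (h : a₁.tokens ≠ 1 ∨ a₂.tokens + a₃.tokens ≠ 2 ∨ a₄.tokens ≠ 1) :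
    D.W a₁ a₂ a₃ a₄ true true true = 0 := by
  by_cases h₁ : a₁ = Outc.zero
  · exact D.W_eq_zero_of_GB (h₁ ▸ D.GB_true _) ..
  by_cases h₄ : a₄ = Outc.zero
  · exact D.W_eq_zero_of_GC (h₄ ▸ D.GC_true _) ..
  by_cases hm : a₂.tokens + a₃.tokens = 1
  · exact D.W_eq_zero_of_GM (D.GM_true _ _ _ hm) ..
  refine D.W_eq_zero_of_P (ringP_four_eq_zero u ?_) ..
  have p₁ : a₁.tokens ≠ 0 := by cases a₁ <;> simp_all [Outc.tokens]
  have p₄ : a₄.tokens ≠ 0 := by cases a₄ <;> simp_all [Outc.tokens]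
  omega

/-- The clockwise law of the merged party is read off from the events where `B` is empty. -/
theorem sum_W_middle_le (hu : u ^ 2 ≤ 1) (a₂ a₃ : Outc) :
    ∑ a₁, ∑ a₄, D.W a₁ a₂ a₃ a₄ true true true ≤
      ∑ a₄, ringP 4 u ![Outc.zero, a₂, a₃, a₄] := by
  calc _ = ∑ a₁, ∑ a₄, D.W a₁ a₂ a₃ a₄ true true false := by
        rw [D.sum_W_M, D.sum_W_M, (D.t_eq hu true).2.2, (D.t_eq hu false).2.2]
    _ = ∑ a₄, D.W Outc.zero a₂ a₃ a₄ true true false := by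
        refine Finset.sum_eq_single_of_mem Outc.zero (Finset.mem_univ _) fun a _ ha => ?_
        exact Finset.sum_eq_zero fun _ _ => D.W_eq_zero_of_GB (D.GB_eq_zero hu ha) ..
    _ ≤ _ := Finset.sum_le_sum fun a₄ _ => D.W_le ..

theorem sum_W_first_le (hu : u ^ 2 ≤ 1) (i : Fin 2) :
    D.GB (Outc.one i) true true ≤ vco u i ^ 2 / 4 := by
  have h : D.t₂ true * D.GB (Outc.one i) true true ≤ vco u i ^ 2 / 8 := by
    rw [← sum_ringP_one_zero hu, (D.t_eq hu true).2.1, ← (D.t_eq hu false).2.1, ← D.sum_W_B]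
    refine Finset.sum_le_sum fun a₂ _ => Finset.sum_le_sum fun a₃ _ => ?_
    rw [Finset.sum_eq_single_of_mem Outc.zero (Finset.mem_univ _) fun a _ ha =>
      D.W_eq_zero_of_GC (D.GC_eq_zero hu ha) ..]
    exact D.W_le ..
  rw [(D.t_eq hu true).2.1] at h
  linarith

theorem sum_W_last_le (hu : u ^ 2 ≤ 1) (l : Fin 2) :
    D.GC (Outc.one l) true true ≤ vco u l ^ 2 / 4 := by
  have h : D.t₁ true * D.GC (Outc.one l) true true ≤ vco u l ^ 2 / 8 := by
    rw [← sum_ringP_middle_one hu, (D.t_eq hu true).1, ← (D.t_eq hu false).1, ← D.sum_W_C,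
      Finset.sum_comm]
    refine Finset.sum_le_sum fun a₂ _ => ?_
    rw [Finset.sum_comm]
    refine Finset.sum_le_sum fun a₃ _ => ?_
    split_ifs with hm
    · exact Finset.sum_le_sum fun a₁ _ => D.W_le ..
    · exact (Finset.sum_eq_zero fun _ _ => D.W_eq_zero_of_GM (D.GM_eq_zero hu hm) ..).le
  rw [(D.t_eq hu true).1] at h
  linarith

theorem le_sum_W_first (hu : u ^ 2 ≤ 1) :
    u ^ 2 / 8 ≤ ∑ a₂, ∑ a₃, ∑ a₄, D.W (Outc.one 1) a₂ a₃ a₄ true true true := by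
  have h2 : D.GB Outc.two true true = 0 := by
    have h := D.sum_W_B Outc.two true true true
    rw [Finset.sum_eq_zero fun a₂ _ => Finset.sum_eq_zero fun a₃ _ => Finset.sum_eq_zero
      fun a₄ _ => D.W_true_eq_zero (by simp [Outc.tokens]), (D.t_eq hu true).2.1] at h
    linarith
  have hs := D.sum_GB true true
  have h0 := D.sum_W_first_le hu 0
  have hv : vco u 0 ^ 2 = 1 - u ^ 2 := by simp [vco, Real.sq_sqrt (sub_nonneg.2 hu)]
  rw [Outc.sum_eq_s2, h2, D.GB_true, (D.t_eq hu true).1, (D.t_eq hu true).2.2] at hs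
  rw [D.sum_W_B, (D.t_eq hu true).2.1]
  linarith

theorem le_sum_W_last (hu : u ^ 2 ≤ 1) :
    u ^ 2 / 8 ≤ ∑ a₁, ∑ a₂, ∑ a₃, D.W a₁ a₂ a₃ (Outc.one 1) true true true := by
  have h2 : D.GC Outc.two true true = 0 := by
    have h := D.sum_W_C Outc.two true true true
    rw [Finset.sum_eq_zero fun a₂ _ => Finset.sum_eq_zero fun a₃ _ => Finset.sum_eq_zero
      fun a₄ _ => D.W_true_eq_zero (by simp [Outc.tokens]), (D.t_eq hu true).1] at h
    linarith
  have hs := D.sum_GC true true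
  have h0 := D.sum_W_last_le hu 0
  have hv : vco u 0 ^ 2 = 1 - u ^ 2 := by simp [vco, Real.sq_sqrt (sub_nonneg.2 hu)]
  rw [Outc.sum_eq_s2, h2, D.GC_true, (D.t_eq hu true).2.1, (D.t_eq hu true).2.2] at hs
  rw [D.sum_W_C, (D.t_eq hu true).1]
  linarith

theorem u_pow_four_le (D : TokenModel fun a b c d => ringP 4 u ![a, b, c, d])
    (hu : u ^ 2 ≤ 1) (hu' : u ^ 2 ≠ 1) : u ^ 4 ≤ 1 / 2 := by
  have hF := D.le_sum_W_first hu
  have hL := D.le_sum_W_last hu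
  have z : ∀ a₁ a₂ a₃ a₄ : Outc, a₁.tokens ≠ 1 ∨ a₂.tokens + a₃.tokens ≠ 2 ∨ a₄.tokens ≠ 1 →
    D.W a₁ a₂ a₃ a₄ true true true = 0 := fun _ _ _ _ h => D.W_true_eq_zero h
  have hmid : ∀ j k, ∑ i, ∑ l, D.W (Outc.one i) (Outc.one j) (Outc.one k) (Outc.one l)
      true true true ≤ vco u j ^ 2 * vco u k ^ 2 / 16 := by
    intro j k
    have h := D.sum_W_middle_le hu (Outc.one j) (Outc.one k)
    rw [sum_ringP_zero_ones] at h
    simpa [Outc.sum_eq_s2, z, Outc.tokens, Fin.sum_univ_two] using h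
  have h02 : ∀ i l, D.W (Outc.one i) Outc.zero Outc.two (Outc.one l) true true true = 0 := by
    have h := D.sum_W_middle_le hu Outc.zero Outc.two
    rw [sum_ringP_zero_zero_two] at h
    have hn := D.W_nonneg
    have h' := le_antisymm h (Finset.sum_nonneg fun _ _ => Finset.sum_nonneg fun _ _ => hn ..)
    intro i l
    have h1 := (Finset.sum_eq_zero_iff_of_nonneg fun _ _ =>
      Finset.sum_nonneg fun _ _ => hn ..).1 h' (Outc.one i) (Finset.mem_univ _)
    exact (Finset.sum_eq_zero_iff_of_nonneg fun _ _ => hn ..).1 h1 _ (Finset.mem_univ _)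
  simp [Outc.sum_eq_s2, z, Outc.tokens, h02] at hF hL
  have n := fun i j k l => D.W_nonneg (Outc.one i) (Outc.one j) (Outc.one k) (Outc.one l)
    true true true
  have c := fun i j k l => (D.W_le (Outc.one i) (Outc.one j) (Outc.one k) (Outc.one l)
    true true true).trans_eq (ringP_ones u i j k l)
  have c20 := fun i l => (D.W_le (Outc.one i) Outc.two Outc.zero (Outc.one l)
    true true true).trans_eq (ringP_one_two_zero_one u i l)
  simp only [Fin.sum_univ_two] at hmid
  have v1 : vco u 1 ^ 2 = u ^ 2 := by simp [vco]
  have v0 : vco u 0 ^ 2 = 1 - u ^ 2 := by simp [vco, Real.sq_sqrt (sub_nonneg.2 hu)]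
  have p4 : (uco u 1 * uco u 1 * uco u 1 * uco u 1 +
      vco u 1 * vco u 1 * vco u 1 * vco u 1) ^ 2 = ((1 - u ^ 2) ^ 2 + u ^ 4) ^ 2 := by
    rw [← v0]; simp [uco, vco]; ring
  have p3 : (uco u 0 * uco u 1 * uco u 1 * uco u 1 +
      vco u 0 * vco u 1 * vco u 1 * vco u 1) ^ 2 =
        u ^ 2 * (1 - u ^ 2) * (1 - u ^ 2 - u ^ 2) ^ 2 := by
    rw [← v0]; simp [uco, vco]; ring
  have c1111 := c 1 1 1 1
  have c0111 := c 0 1 1 1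
  have c1110 := c 1 1 1 0
  have c1011 := c 1 0 1 1
  have c1101 := c 1 1 0 1
  rw [p4] at c1111
  rw [p3] at c0111
  rw [show uco u 1 * uco u 1 * uco u 1 * uco u 0 + vco u 1 * vco u 1 * vco u 1 * vco u 0 =
    uco u 0 * uco u 1 * uco u 1 * uco u 1 + vco u 0 * vco u 1 * vco u 1 * vco u 1 by ring, p3]
    at c1110
  rw [show uco u 1 * uco u 0 * uco u 1 * uco u 1 + vco u 1 * vco u 0 * vco u 1 * vco u 1 =
    uco u 0 * uco u 1 * uco u 1 * uco u 1 + vco u 0 * vco u 1 * vco u 1 * vco u 1 by ring, p3]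
    at c1011
  rw [show uco u 1 * uco u 1 * uco u 0 * uco u 1 + vco u 1 * vco u 1 * vco u 0 * vco u 1 =
    uco u 0 * uco u 1 * uco u 1 * uco u 1 + vco u 0 * vco u 1 * vco u 1 * vco u 1 by ring, p3]
    at c1101
  have m00 := hmid 0 0
  have m01 := hmid 0 1
  have m10 := hmid 1 0
  have d01 := c20 0 1
  have d10 := c20 1 0
  have d11 := c20 1 1
  rw [v0] at m00 m01 m10 d01 d10
  rw [v1] at m01 m10 d01 d10 d11
  have key : (1 - u ^ 2) ^ 2 * (2 * u ^ 4 - 1) ≤ 0 := by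
    linarith [n 0 0 0 0, n 0 0 0 1, n 1 0 0 0, n 0 0 1 0, n 0 1 0 0]
  have hpos : 0 < (1 - u ^ 2) ^ 2 := by
    have : 1 - u ^ 2 ≠ 0 := sub_ne_zero.2 (Ne.symm hu')
    positivity
  nlinarith [nonpos_of_mul_nonpos_right key hpos]

end TokenModel

section Measure

/-- The indicator function of `T` or of its complement, according to the bit `s`. -/
noncomputable def sideIndicator {Ω : Type*} (T : Set Ω) (s : Bool) : Ω → ℝ :=
  (if s then T else Tᶜ).indicator 1

theorem sum_sideIndicator {Ω : Type*} (T : Set Ω) (ω : Ω) : ∑ s, sideIndicator T s ω = 1 := by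
  by_cases h : ω ∈ T <;> simp [sideIndicator, h]

theorem mul_sideIndicator_true {Ω : Type*} {T : Set Ω} {ω : Ω} {z : ℝ} (h : ω ∈ T → z = 0) :
    z * sideIndicator T true ω = 0 := by
  by_cases hω : ω ∈ T <;> simp [sideIndicator, hω, h]

theorem mul_sideIndicator_false {Ω : Type*} {T : Set Ω} {ω : Ω} {z : ℝ} (h : ω ∉ T → z = 0) :
    z * sideIndicator T false ω = 0 := by
  by_cases hω : ω ∈ T <;> simp [sideIndicator, hω, h]

variable {Ω : Type*} [MeasurableSpace Ω]

/-- Measurable functions with values in the unit interval. -/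
def UnitMeasurable (f : Ω → ℝ) : Prop := Measurable f ∧ ∀ ω, f ω ∈ Set.Icc (0 : ℝ) 1

namespace UnitMeasurable

variable {f g : Ω → ℝ}

theorem nonneg (hf : UnitMeasurable f) (ω : Ω) : 0 ≤ f ω := (hf.2 ω).1

theorem mul (hf : UnitMeasurable f) (hg : UnitMeasurable g) :
    UnitMeasurable fun ω => f ω * g ω :=
  ⟨hf.1.mul hg.1, fun ω => unitInterval.mul_mem (hf.2 ω) (hg.2 ω)⟩

theorem comp {Ω' : Type*} [MeasurableSpace Ω'] (hf : UnitMeasurable f) {X : Ω' → Ω}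
    (hX : Measurable X) : UnitMeasurable fun ω => f (X ω) :=
  ⟨hf.1.comp hX, fun ω => hf.2 (X ω)⟩

theorem integrable (hf : UnitMeasurable f) (π : Measure Ω) [IsFiniteMeasure π] :
    Integrable f π :=
  Integrable.of_bound hf.1.aestronglyMeasurable 1 <| ae_of_all _ fun ω => by
    rw [Real.norm_of_nonneg (hf.2 ω).1]; exact (hf.2 ω).2

end UnitMeasurable

theorem unitMeasurable_sideIndicator {T : Set Ω} (hT : MeasurableSet T) (s : Bool) :
    UnitMeasurable (sideIndicator T s) := by
  refine ⟨measurable_one.indicator (by cases s <;> simp [hT]), fun ω => ?_⟩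
  unfold sideIndicator
  by_cases h : ω ∈ (if s then T else Tᶜ) <;> simp [h]

variable {α β γ : Type*} [MeasurableSpace α] [MeasurableSpace β] [MeasurableSpace γ]
  {μ : Measure α} {ν : Measure β} {ρ : Measure γ} [IsProbabilityMeasure ν]

theorem integral_mul_of_measurePreserving_prod [IsProbabilityMeasure μ] {π : Measure Ω}
    {X : Ω → α} {Y : Ω → β}
    (h : MeasurePreserving (fun ω => (X ω, Y ω)) π (μ.prod ν)) {f : α → ℝ} {g : β → ℝ}
    (hf : Measurable f) (hg : Measurable g) :
    ∫ ω, f (X ω) * g (Y ω) ∂π = (∫ ω, f (X ω) ∂π) * ∫ ω, g (Y ω) ∂π := by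
  have key : ∀ {f : α → ℝ} {g : β → ℝ}, Measurable f → Measurable g →
      ∫ ω, f (X ω) * g (Y ω) ∂π = (∫ x, f x ∂μ) * ∫ y, g y ∂ν := by
    intro f g hf hg
    rw [← integral_prod_mul, ← h.map_eq, integral_map h.aemeasurable]
    exact ((hf.comp measurable_fst).mul (hg.comp measurable_snd)).aestronglyMeasurable
  have h₁ := key hf (measurable_const (a := (1 : ℝ)))
  have h₂ := key (measurable_const (a := (1 : ℝ))) hg
  simp only [mul_one, one_mul, integral_const, probReal_univ, smul_eq_mul] at h₁ h₂
  rw [key hf hg, h₁, h₂]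

/-- If nonnegative functions `f (x, y)` and `g (x, z)` of independent variables have disjoint
supports, then a set of values of the shared variable `x` separates them. -/
theorem exists_separating_set [IsProbabilityMeasure ρ] {π : Measure Ω}
    {X : Ω → α} {Y : Ω → β} {Z : Ω → γ}
    (h : MeasurePreserving (fun ω => (X ω, Y ω, Z ω)) π (μ.prod (ν.prod ρ)))
    {f : α → β → ℝ} {g : α → γ → ℝ}
    (hf : Measurable fun q : α × β => f q.1 q.2) (hg : Measurable fun q : α × γ => g q.1 q.2)
    (hf₀ : ∀ x y, 0 ≤ f x y)
    (hfg : ∀ᵐ ω ∂π, f (X ω) (Y ω) * g (X ω) (Z ω) = 0) :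
    ∃ T, MeasurableSet T ∧ (∀ᵐ ω ∂π, X ω ∉ T → f (X ω) (Y ω) = 0) ∧
      ∀ᵐ ω ∂π, X ω ∈ T → g (X ω) (Z ω) = 0 := by
  have mf : Measurable fun q : α × β × γ => f q.1 q.2.1 :=
    hf.comp (measurable_fst.prodMk measurable_snd.fst)
  have mg : Measurable fun q : α × β × γ => g q.1 q.2.2 :=
    hg.comp (measurable_fst.prodMk measurable_snd.snd)
  have hprod : ∀ᵐ q ∂(μ.prod (ν.prod ρ)), f q.1 q.2.1 * g q.1 q.2.2 = 0 := by
    rw [← h.map_eq]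
    exact (ae_map_iff h.aemeasurable ((mf.mul mg) (measurableSet_singleton 0))).2 hfg
  have mF : Measurable fun x => ∫⁻ y, ENNReal.ofReal (f x y) ∂ν :=
    hf.ennreal_ofReal.lintegral_prod_right'
  let T : Set α := {x | ∫⁻ y, ENNReal.ofReal (f x y) ∂ν ≠ 0}
  have hT : MeasurableSet T := mF (measurableSet_singleton 0).compl
  have zero_iff : ∀ x, x ∉ T ↔ ∀ᵐ y ∂ν, f x y = 0 := by
    intro x
    rw [Set.mem_ofPred_eq, not_not]
    refine (lintegral_eq_zero_iff
      (hf.comp (measurable_prodMk_left (x := x))).ennreal_ofReal).trans ?_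
    refine Filter.eventually_congr (ae_of_all _ fun y => ?_)
    simp only [Pi.zero_apply, ENNReal.ofReal_eq_zero]
    exact ⟨fun h => le_antisymm h (hf₀ x y), fun h => h.le⟩
  refine ⟨T, hT, ?_, ?_⟩
  · refine h.quasiMeasurePreserving.ae (p := fun q => q.1 ∉ T → f q.1 q.2.1 = 0) ?_
    rw [Measure.ae_prod_iff_ae_ae]
    · refine ae_of_all _ fun x => ?_
      by_cases hx : x ∈ T
      · simp [hx]
      · have := (zero_iff x).1 hx
        exact (Measure.quasiMeasurePreserving_fst.ae this).mono fun q hq _ => hq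
    · have : MeasurableSet ({q : α × β × γ | q.1 ∈ T} ∪ {q | f q.1 q.2.1 = 0}) :=
        (measurable_fst hT).union (mf (measurableSet_singleton 0))
      convert this using 1
      ext q; simp only [Set.mem_ofPred_eq, Set.mem_union]; tauto
  · refine h.quasiMeasurePreserving.ae (p := fun q => q.1 ∈ T → g q.1 q.2.2 = 0) ?_
    rw [Measure.ae_prod_iff_ae_ae]
    · refine (Measure.ae_ae_of_ae_prod hprod).mono fun x hx => ?_
      by_cases hxT : x ∈ T
      · have hy : ∃ᵐ y ∂ν, f x y ≠ 0 := by
          intro hcon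
          exact (zero_iff x).2 (by simpa using hcon) hxT
        obtain ⟨y, hy, hz⟩ := (hy.and_eventually (Measure.ae_ae_of_ae_prod hx)).exists
        have hz' : ∀ᵐ z ∂ρ, g x z = 0 :=
          hz.mono fun z hz => (mul_eq_zero.1 hz).resolve_left hy
        exact (Measure.quasiMeasurePreserving_snd.ae hz').mono fun q hq _ => hq
      · simp [hxT]
    · have : MeasurableSet ({q : α × β × γ | q.1 ∉ T} ∪ {q | g q.1 q.2.2 = 0}) :=
        (measurable_fst hT.compl).union (mg (measurableSet_singleton 0))
      convert this using 1
      ext q; simp only [Set.mem_ofPred_eq, Set.mem_union]; tauto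

theorem measurePreserving_rotate (μ : Measure α) (ν : Measure β) (ρ : Measure γ)
    [IsProbabilityMeasure μ] [IsProbabilityMeasure ν] [IsProbabilityMeasure ρ] :
    MeasurePreserving (fun q : α × β × γ => (q.2.1, q.2.2, q.1)) (μ.prod (ν.prod ρ))
      (ν.prod (ρ.prod μ)) :=
  (measurePreserving_prodAssoc ν ρ μ).comp (Measure.measurePreserving_swap (μ := μ) (ν := ν.prod ρ))

theorem measurePreserving_swap_right (μ : Measure α) (ν : Measure β) (ρ : Measure γ)
    [IsProbabilityMeasure μ] [IsProbabilityMeasure ν] [IsProbabilityMeasure ρ] :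
    MeasurePreserving (fun q : α × β × γ => (q.1, q.2.2, q.2.1)) (μ.prod (ν.prod ρ))
      (μ.prod (ρ.prod ν)) :=
  (MeasurePreserving.id μ).prod (Measure.measurePreserving_swap (μ := ν) (ν := ρ))

/-- Random bits `τₖ` independent of the party not connected to source `k`, and supporting the
light outcomes of each party, yield a token model. -/
theorem TokenModel.nonempty_of_bits {P : Outc → Outc → Outc → Outc → ℝ} (π : Measure Ω)
    [IsProbabilityMeasure π] {b : Outc → Ω → ℝ} {m : Outc → Outc → Ω → ℝ} {c : Outc → Ω → ℝ}
    {τ₁ τ₂ τ₃ : Bool → Ω → ℝ}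
    (hb : ∀ a, UnitMeasurable (b a)) (hm : ∀ a a', UnitMeasurable (m a a'))
    (hc : ∀ a, UnitMeasurable (c a)) (h₁ : ∀ s, UnitMeasurable (τ₁ s))
    (h₂ : ∀ s, UnitMeasurable (τ₂ s)) (h₃ : ∀ s, UnitMeasurable (τ₃ s))
    (sb : ∀ ω, ∑ a, b a ω = 1) (sm : ∀ ω, ∑ a, ∑ a', m a a' ω = 1) (sc : ∀ ω, ∑ a, c a ω = 1)
    (s₁ : ∀ ω, ∑ s, τ₁ s ω = 1) (s₂ : ∀ ω, ∑ s, τ₂ s ω = 1) (s₃ : ∀ ω, ∑ s, τ₃ s ω = 1)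
    (hP : ∀ a₁ a₂ a₃ a₄, P a₁ a₂ a₃ a₄ = ∫ ω, b a₁ ω * m a₂ a₃ ω * c a₄ ω ∂π)
    (iB : ∀ a r s t, ∫ ω, τ₂ s ω * (b a ω * (τ₁ r ω * τ₃ t ω)) ∂π =
      (∫ ω, τ₂ s ω ∂π) * ∫ ω, b a ω * (τ₁ r ω * τ₃ t ω) ∂π)
    (iM : ∀ a a' r s t, ∫ ω, τ₃ t ω * (m a a' ω * (τ₁ r ω * τ₂ s ω)) ∂π =
      (∫ ω, τ₃ t ω ∂π) * ∫ ω, m a a' ω * (τ₁ r ω * τ₂ s ω) ∂π)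
    (iC : ∀ a r s t, ∫ ω, τ₁ r ω * (c a ω * (τ₂ s ω * τ₃ t ω)) ∂π =
      (∫ ω, τ₁ r ω ∂π) * ∫ ω, c a ω * (τ₂ s ω * τ₃ t ω) ∂π)
    (i₁₂ : ∀ r s, ∫ ω, τ₁ r ω * τ₂ s ω ∂π = (∫ ω, τ₁ r ω ∂π) * ∫ ω, τ₂ s ω ∂π)
    (i₁₃ : ∀ r t, ∫ ω, τ₁ r ω * τ₃ t ω ∂π = (∫ ω, τ₁ r ω ∂π) * ∫ ω, τ₃ t ω ∂π)
    (i₂₃ : ∀ s t, ∫ ω, τ₂ s ω * τ₃ t ω ∂π = (∫ ω, τ₂ s ω ∂π) * ∫ ω, τ₃ t ω ∂π)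
    (zB₁ : ∀ᵐ ω ∂π, b Outc.zero ω * τ₁ false ω = 0)
    (zB₃ : ∀ᵐ ω ∂π, b Outc.zero ω * τ₃ true ω = 0)
    (zM₁ : ∀ a a', a.tokens + a'.tokens = 1 → ∀ᵐ ω ∂π, m a a' ω * τ₁ true ω = 0)
    (zM₂ : ∀ a a', a.tokens + a'.tokens = 1 → ∀ᵐ ω ∂π, m a a' ω * τ₂ false ω = 0)
    (zC₂ : ∀ᵐ ω ∂π, c Outc.zero ω * τ₂ true ω = 0)
    (zC₃ : ∀ᵐ ω ∂π, c Outc.zero ω * τ₃ false ω = 0) :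
    Nonempty (TokenModel P) := by
  have hW : ∀ a₁ a₂ a₃ a₄ r s t, UnitMeasurable fun ω =>
      b a₁ ω * m a₂ a₃ ω * c a₄ ω * (τ₁ r ω * τ₂ s ω * τ₃ t ω) := fun _ _ _ _ _ _ _ =>
    (((hb _).mul (hm _ _)).mul (hc _)).mul (((h₁ _).mul (h₂ _)).mul (h₃ _))
  have iW := fun a₁ a₂ a₃ a₄ r s t => (hW a₁ a₂ a₃ a₄ r s t).integrable π
  have sum_two : ∀ {τ : Bool → Ω → ℝ}, (∀ s, UnitMeasurable (τ s)) →
      (∀ ω, ∑ s, τ s ω = 1) → ∫ ω, τ true ω ∂π + ∫ ω, τ false ω ∂π = 1 := by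
    intro τ h hs
    rw [← integral_add ((h _).integrable π) ((h _).integrable π)]
    simp only [Fintype.sum_bool] at hs
    simp [hs]
  refine ⟨{
    W := fun a₁ a₂ a₃ a₄ r s t =>
      ∫ ω, b a₁ ω * m a₂ a₃ ω * c a₄ ω * (τ₁ r ω * τ₂ s ω * τ₃ t ω) ∂π
    t₁ := fun r => ∫ ω, τ₁ r ω ∂π
    t₂ := fun s => ∫ ω, τ₂ s ω ∂π
    t₃ := fun t => ∫ ω, τ₃ t ω ∂π
    GB := fun a r t => ∫ ω, b a ω * (τ₁ r ω * τ₃ t ω) ∂π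
    GM := fun a a' r s => ∫ ω, m a a' ω * (τ₁ r ω * τ₂ s ω) ∂π
    GC := fun a s t => ∫ ω, c a ω * (τ₂ s ω * τ₃ t ω) ∂π
    W_nonneg := fun a₁ a₂ a₃ a₄ r s t => integral_nonneg fun ω => (hW a₁ a₂ a₃ a₄ r s t).nonneg ω
    sum_W := fun a₁ a₂ a₃ a₄ => ?_
    t₁_nonneg := fun s => integral_nonneg (h₁ s).nonneg
    t₂_nonneg := fun s => integral_nonneg (h₂ s).nonneg
    t₃_nonneg := fun s => integral_nonneg (h₃ s).nonneg
    sum_t₁ := sum_two h₁ s₁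
    sum_t₂ := sum_two h₂ s₂
    sum_t₃ := sum_two h₃ s₃
    GB_nonneg := fun a r t => integral_nonneg ((hb a).mul ((h₁ r).mul (h₃ t))).nonneg
    GM_nonneg := fun a a' r s => integral_nonneg ((hm a a').mul ((h₁ r).mul (h₂ s))).nonneg
    GC_nonneg := fun a s t => integral_nonneg ((hc a).mul ((h₂ s).mul (h₃ t))).nonneg
    sum_W_B := fun a₁ r s t => ?_
    sum_W_M := fun a₂ a₃ r s t => ?_
    sum_W_C := fun a₄ r s t => ?_
    sum_GB := fun r t => ?_
    sum_GM := fun r s => ?_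
    sum_GC := fun s t => ?_
    GB_false := fun t => ?_
    GB_true := fun r => ?_
    GM_true := fun a a' s h => ?_
    GM_false := fun a a' r h => ?_
    GC_true := fun t => ?_
    GC_false := fun s => ?_ }⟩
  · rw [hP]
    simp_rw [← integral_finsetSum _ fun t _ => iW a₁ a₂ a₃ a₄ _ _ t]
    simp_rw [← integral_finsetSum _ fun s _ => integrable_finsetSum _
      fun t _ => iW a₁ a₂ a₃ a₄ _ s t]
    rw [← integral_finsetSum _ fun r _ => integrable_finsetSum _ fun s _ =>
      integrable_finsetSum _ fun t _ => iW a₁ a₂ a₃ a₄ r s t]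
    refine integral_congr_ae (ae_of_all _ fun ω => ?_)
    simp only [← Finset.mul_sum, s₁, s₂, s₃, mul_one]
  · rw [← iB]
    simp_rw [← integral_finsetSum _ fun a₄ _ => iW a₁ _ _ a₄ r s t]
    simp_rw [← integral_finsetSum _ fun a₃ _ => integrable_finsetSum _
      fun a₄ _ => iW a₁ _ a₃ a₄ r s t]
    rw [← integral_finsetSum _ fun a₂ _ => integrable_finsetSum _ fun a₃ _ =>
      integrable_finsetSum _ fun a₄ _ => iW a₁ a₂ a₃ a₄ r s t]
    refine integral_congr_ae (ae_of_all _ fun ω => ?_)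
    simp only [← Finset.mul_sum, ← Finset.sum_mul, sm, sc, mul_one]
    ring
  · rw [← iM]
    simp_rw [← integral_finsetSum _ fun a₄ _ => iW _ a₂ a₃ a₄ r s t]
    rw [← integral_finsetSum _ fun a₁ _ =>
      integrable_finsetSum _ fun a₄ _ => iW a₁ a₂ a₃ a₄ r s t]
    refine integral_congr_ae (ae_of_all _ fun ω => ?_)
    simp only [← Finset.mul_sum, ← Finset.sum_mul, sb, sc, mul_one, one_mul]
    ring
  · rw [← iC]
    simp_rw [← integral_finsetSum _ fun a₃ _ => iW _ _ a₃ a₄ r s t]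
    simp_rw [← integral_finsetSum _ fun a₂ _ => integrable_finsetSum _
      fun a₃ _ => iW _ a₂ a₃ a₄ r s t]
    rw [← integral_finsetSum _ fun a₁ _ => integrable_finsetSum _ fun a₂ _ =>
      integrable_finsetSum _ fun a₃ _ => iW a₁ a₂ a₃ a₄ r s t]
    refine integral_congr_ae (ae_of_all _ fun ω => ?_)
    simp only [← Finset.mul_sum, ← Finset.sum_mul, sb, sm, mul_one, one_mul]
    ring
  · rw [← i₁₃, ← integral_finsetSum _ fun a _ => ((hb a).mul ((h₁ r).mul (h₃ t))).integrable π]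
    simp only [← Finset.sum_mul, sb, one_mul]
  · simp_rw [← integral_finsetSum _ fun a' _ =>
      ((hm _ a').mul ((h₁ r).mul (h₂ s))).integrable π]
    rw [← i₁₂, ← integral_finsetSum _ fun a _ => integrable_finsetSum _ fun a' _ =>
      ((hm a a').mul ((h₁ r).mul (h₂ s))).integrable π]
    simp only [← Finset.sum_mul, sm, one_mul]
  · rw [← i₂₃, ← integral_finsetSum _ fun a _ => ((hc a).mul ((h₂ s).mul (h₃ t))).integrable π]
    simp only [← Finset.sum_mul, sc, one_mul]
  · exact integral_eq_zero_of_ae (zB₁.mono fun ω h => by simp [← mul_assoc, h])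
  · exact integral_eq_zero_of_ae (zB₃.mono fun ω h => by simp [mul_left_comm (b _ ω), h])
  · exact integral_eq_zero_of_ae ((zM₁ a a' h).mono fun ω h => by simp [← mul_assoc, h])
  · exact integral_eq_zero_of_ae ((zM₂ a a' h).mono fun ω h => by
      simp [mul_left_comm (m _ _ ω), h])
  · exact integral_eq_zero_of_ae (zC₂.mono fun ω h => by simp [← mul_assoc, h])
  · exact integral_eq_zero_of_ae (zC₃.mono fun ω h => by simp [mul_left_comm (c _ ω), h])

end Measure

section Local

/-- The total weight of the outcomes of the merged party that announce a single token. -/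
noncomputable def lightWeight {α β : Type*} (p : Outc → Outc → α → β → ℝ) (x : α) (y : β) : ℝ :=
  ∑ a, ∑ a', if a.tokens + a'.tokens = 1 then p a a' x y else 0

section LightWeight

variable {α β : Type*} {p : Outc → Outc → α → β → ℝ} {x : α} {y : β}

theorem lightWeight_nonneg (h : ∀ a a', 0 ≤ p a a' x y) : 0 ≤ lightWeight p x y :=
  Finset.sum_nonneg fun a _ => Finset.sum_nonneg fun a' _ => by
    split_ifs
    exacts [h a a', le_rfl]

theorem eq_zero_of_lightWeight_eq_zero (h : ∀ a a', 0 ≤ p a a' x y) (h0 : lightWeight p x y = 0)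
    {a a' : Outc} (ha : a.tokens + a'.tokens = 1) : p a a' x y = 0 := by
  have n : ∀ a a', 0 ≤ if a.tokens + a'.tokens = 1 then p a a' x y else 0 := fun a a' => by
    split_ifs
    exacts [h a a', le_rfl]
  have h1 := (Finset.sum_eq_zero_iff_of_nonneg
    fun a _ => Finset.sum_nonneg fun a' _ => n a a').1 h0 a (Finset.mem_univ a)
  have h2 := (Finset.sum_eq_zero_iff_of_nonneg fun a' _ => n a a').1 h1 a' (Finset.mem_univ a')
  rwa [if_pos ha] at h2

theorem measurable_lightWeight [MeasurableSpace α] [MeasurableSpace β]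
    (h : ∀ a a', Measurable fun q : α × β => p a a' q.1 q.2) :
    Measurable fun q : α × β => lightWeight p q.1 q.2 := by
  refine Finset.measurable_sum _ fun a _ => Finset.measurable_sum _ fun a' _ => ?_
  split_ifs
  exacts [h a a', measurable_const]

end LightWeight

variable {Λ₁ Λ₂ Λ₃ : Type*} [MeasurableSpace Λ₁] [MeasurableSpace Λ₂] [MeasurableSpace Λ₃]

theorem measurePreserving_second (μ₁ : Measure Λ₁) (μ₂ : Measure Λ₂) (μ₃ : Measure Λ₃)
    [IsProbabilityMeasure μ₁] [IsProbabilityMeasure μ₂] [IsProbabilityMeasure μ₃] :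
    MeasurePreserving (fun q : Λ₁ × Λ₂ × Λ₃ => (q.2.1, q.1, q.2.2)) (μ₁.prod (μ₂.prod μ₃))
      (μ₂.prod (μ₁.prod μ₃)) :=
  (measurePreserving_swap_right μ₂ μ₃ μ₁).comp (measurePreserving_rotate μ₁ μ₂ μ₃)

theorem measurePreserving_third (μ₁ : Measure Λ₁) (μ₂ : Measure Λ₂) (μ₃ : Measure Λ₃)
    [IsProbabilityMeasure μ₁] [IsProbabilityMeasure μ₂] [IsProbabilityMeasure μ₃] :
    MeasurePreserving (fun q : Λ₁ × Λ₂ × Λ₃ => (q.2.2, q.1, q.2.1)) (μ₁.prod (μ₂.prod μ₃))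
      (μ₃.prod (μ₁.prod μ₂)) :=
  (measurePreserving_rotate μ₂ μ₃ μ₁).comp (measurePreserving_rotate μ₁ μ₂ μ₃)

/-- Sets of hidden-variable values that support the light outcomes of the adjacent parties yield a
token model. -/
theorem TokenModel.nonempty_of_sets {P : Outc → Outc → Outc → Outc → ℝ}
    (μ₁ : Measure Λ₁) (μ₂ : Measure Λ₂) (μ₃ : Measure Λ₃)
    [IsProbabilityMeasure μ₁] [IsProbabilityMeasure μ₂] [IsProbabilityMeasure μ₃]
    {pB : Outc → Λ₁ → Λ₃ → ℝ} {pM : Outc → Outc → Λ₁ → Λ₂ → ℝ} {pC : Outc → Λ₂ → Λ₃ → ℝ}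
    (uB : ∀ a, UnitMeasurable fun q : Λ₁ × Λ₃ => pB a q.1 q.2)
    (uM : ∀ a a', UnitMeasurable fun q : Λ₁ × Λ₂ => pM a a' q.1 q.2)
    (uC : ∀ a, UnitMeasurable fun q : Λ₂ × Λ₃ => pC a q.1 q.2)
    (sB : ∀ x y, ∑ a, pB a x y = 1) (sM : ∀ x y, ∑ a, ∑ a', pM a a' x y = 1)
    (sC : ∀ x y, ∑ a, pC a x y = 1)
    (hP : ∀ a₁ a₂ a₃ a₄, P a₁ a₂ a₃ a₄ =
      ∫ q, pB a₁ q.1 q.2.2 * pM a₂ a₃ q.1 q.2.1 * pC a₄ q.2.1 q.2.2 ∂(μ₁.prod (μ₂.prod μ₃)))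
    {T₁ : Set Λ₁} {T₂ : Set Λ₂} {T₃ : Set Λ₃}
    (hT₁ : MeasurableSet T₁) (hT₂ : MeasurableSet T₂) (hT₃ : MeasurableSet T₃)
    (zB₁ : ∀ᵐ q ∂(μ₁.prod (μ₂.prod μ₃)), q.1 ∉ T₁ → pB Outc.zero q.1 q.2.2 = 0)
    (zB₃ : ∀ᵐ q ∂(μ₁.prod (μ₂.prod μ₃)), q.2.2 ∈ T₃ → pB Outc.zero q.1 q.2.2 = 0)
    (zM₁ : ∀ a a', a.tokens + a'.tokens = 1 →
      ∀ᵐ q ∂(μ₁.prod (μ₂.prod μ₃)), q.1 ∈ T₁ → pM a a' q.1 q.2.1 = 0)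
    (zM₂ : ∀ a a', a.tokens + a'.tokens = 1 →
      ∀ᵐ q ∂(μ₁.prod (μ₂.prod μ₃)), q.2.1 ∉ T₂ → pM a a' q.1 q.2.1 = 0)
    (zC₂ : ∀ᵐ q ∂(μ₁.prod (μ₂.prod μ₃)), q.2.1 ∈ T₂ → pC Outc.zero q.2.1 q.2.2 = 0)
    (zC₃ : ∀ᵐ q ∂(μ₁.prod (μ₂.prod μ₃)), q.2.2 ∉ T₃ → pC Outc.zero q.2.1 q.2.2 = 0) :
    Nonempty (TokenModel P) := by
  have m₁₃ : Measurable fun q : Λ₁ × Λ₂ × Λ₃ => (q.1, q.2.2) := by fun_prop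
  have m₁₂ : Measurable fun q : Λ₁ × Λ₂ × Λ₃ => (q.1, q.2.1) := by fun_prop
  have n₁ := unitMeasurable_sideIndicator hT₁
  have n₂ := unitMeasurable_sideIndicator hT₂
  have n₃ := unitMeasurable_sideIndicator hT₃
  have id₁ := MeasurePreserving.id (μ₁.prod (μ₂.prod μ₃))
  have e₂ := measurePreserving_second μ₁ μ₂ μ₃
  have e₃ := measurePreserving_third μ₁ μ₂ μ₃
  refine TokenModel.nonempty_of_bits (μ₁.prod (μ₂.prod μ₃))
    (b := fun a q => pB a q.1 q.2.2) (m := fun a a' q => pM a a' q.1 q.2.1)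
    (c := fun a q => pC a q.2.1 q.2.2) (τ₁ := fun s q => sideIndicator T₁ s q.1)
    (τ₂ := fun s q => sideIndicator T₂ s q.2.1) (τ₃ := fun s q => sideIndicator T₃ s q.2.2)
    (fun a => (uB a).comp m₁₃) (fun a a' => (uM a a').comp m₁₂)
    (fun a => (uC a).comp measurable_snd)
    (fun s => (n₁ s).comp measurable_fst) (fun s => (n₂ s).comp measurable_snd.fst)
    (fun s => (n₃ s).comp measurable_snd.snd) (fun q => sB _ _) (fun q => sM _ _)
    (fun q => sC _ _) (fun q => sum_sideIndicator _ _) (fun q => sum_sideIndicator _ _)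
    (fun q => sum_sideIndicator _ _) hP ?_ ?_ ?_ ?_ ?_ ?_ ?_ ?_ ?_ ?_ ?_ ?_
  · exact fun a r s t => integral_mul_of_measurePreserving_prod e₂ (n₂ s).1
      (g := fun q => pB a q.1 q.2 * (sideIndicator T₁ r q.1 * sideIndicator T₃ t q.2))
      ((uB a).1.mul (((n₁ r).1.comp measurable_fst).mul ((n₃ t).1.comp measurable_snd)))
  · exact fun a a' r s t => integral_mul_of_measurePreserving_prod e₃ (n₃ t).1
      (g := fun q => pM a a' q.1 q.2 * (sideIndicator T₁ r q.1 * sideIndicator T₂ s q.2))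
      ((uM a a').1.mul (((n₁ r).1.comp measurable_fst).mul ((n₂ s).1.comp measurable_snd)))
  · exact fun a r s t => integral_mul_of_measurePreserving_prod id₁ (n₁ r).1
      (g := fun q => pC a q.1 q.2 * (sideIndicator T₂ s q.1 * sideIndicator T₃ t q.2))
      ((uC a).1.mul (((n₂ s).1.comp measurable_fst).mul ((n₃ t).1.comp measurable_snd)))
  · exact fun r s => integral_mul_of_measurePreserving_prod id₁ (n₁ r).1
      (g := fun q => sideIndicator T₂ s q.1) ((n₂ s).1.comp measurable_fst)
  · exact fun r t => integral_mul_of_measurePreserving_prod id₁ (n₁ r).1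
      (g := fun q => sideIndicator T₃ t q.2) ((n₃ t).1.comp measurable_snd)
  · exact fun s t => integral_mul_of_measurePreserving_prod e₂ (n₂ s).1
      (g := fun q => sideIndicator T₃ t q.2) ((n₃ t).1.comp measurable_snd)
  · exact zB₁.mono fun q h => mul_sideIndicator_false h
  · exact zB₃.mono fun q h => mul_sideIndicator_true h
  · exact fun a a' ha => (zM₁ a a' ha).mono fun q h => mul_sideIndicator_true h
  · exact fun a a' ha => (zM₂ a a' ha).mono fun q h => mul_sideIndicator_false h
  · exact zC₂.mono fun q h => mul_sideIndicator_true h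
  · exact zC₃.mono fun q h => mul_sideIndicator_false h

set_option maxHeartbeats 2000000 in
/-- Token rigidity: in a local model of the merged triangle whose light outcomes are mutually
exclusive, the hidden variables determine the directions in which the tokens travel. -/
theorem TokenModel.nonempty_of_local {P : Outc → Outc → Outc → Outc → ℝ}
    (μ₁ : Measure Λ₁) (μ₂ : Measure Λ₂) (μ₃ : Measure Λ₃)
    [IsProbabilityMeasure μ₁] [IsProbabilityMeasure μ₂] [IsProbabilityMeasure μ₃]
    {pB : Outc → Λ₁ → Λ₃ → ℝ} {pM : Outc → Outc → Λ₁ → Λ₂ → ℝ} {pC : Outc → Λ₂ → Λ₃ → ℝ}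
    (mB : ∀ a, Measurable fun q : Λ₁ × Λ₃ => pB a q.1 q.2)
    (mM : ∀ a a', Measurable fun q : Λ₁ × Λ₂ => pM a a' q.1 q.2)
    (mC : ∀ a, Measurable fun q : Λ₂ × Λ₃ => pC a q.1 q.2)
    (kB : ∀ x y, (∀ a, 0 ≤ pB a x y) ∧ ∑ a, pB a x y = 1)
    (kM : ∀ x y, (∀ a a', 0 ≤ pM a a' x y) ∧ ∑ a, ∑ a', pM a a' x y = 1)
    (kC : ∀ x y, (∀ a, 0 ≤ pC a x y) ∧ ∑ a, pC a x y = 1)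
    (hP : ∀ a₁ a₂ a₃ a₄, P a₁ a₂ a₃ a₄ =
      ∫ x₁, ∫ x₂, ∫ x₃, pB a₁ x₁ x₃ * pM a₂ a₃ x₁ x₂ * pC a₄ x₂ x₃ ∂μ₃ ∂μ₂ ∂μ₁)
    (zBM : ∀ a₂ a₃ a₄, a₂.tokens + a₃.tokens = 1 → P Outc.zero a₂ a₃ a₄ = 0)
    (zMC : ∀ a₁ a₂ a₃, a₂.tokens + a₃.tokens = 1 → P a₁ a₂ a₃ Outc.zero = 0)
    (zBC : ∀ a₂ a₃, P Outc.zero a₂ a₃ Outc.zero = 0) :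
    Nonempty (TokenModel P) := by
  have uB : ∀ a, UnitMeasurable fun q : Λ₁ × Λ₃ => pB a q.1 q.2 := fun a =>
    ⟨mB a, fun q => ⟨(kB _ _).1 a, (kB q.1 q.2).2 ▸
      Finset.single_le_sum (f := fun a => pB a q.1 q.2) (fun a _ => (kB _ _).1 a)
        (Finset.mem_univ a)⟩⟩
  have uC : ∀ a, UnitMeasurable fun q : Λ₂ × Λ₃ => pC a q.1 q.2 := fun a =>
    ⟨mC a, fun q => ⟨(kC _ _).1 a, (kC q.1 q.2).2 ▸
      Finset.single_le_sum (f := fun a => pC a q.1 q.2) (fun a _ => (kC _ _).1 a)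
        (Finset.mem_univ a)⟩⟩
  have uM : ∀ a a', UnitMeasurable fun q : Λ₁ × Λ₂ => pM a a' q.1 q.2 := fun a a' =>
    ⟨mM a a', fun q => ⟨(kM _ _).1 a a', (kM q.1 q.2).2 ▸
      (Finset.single_le_sum (f := fun a' => pM a a' q.1 q.2) (fun a' _ => (kM _ _).1 a a')
        (Finset.mem_univ a')).trans
      (Finset.single_le_sum (f := fun a => ∑ a', pM a a' q.1 q.2)
        (fun a _ => Finset.sum_nonneg fun a' _ => (kM _ _).1 a a') (Finset.mem_univ a))⟩⟩
  have m₁₃ : Measurable fun q : Λ₁ × Λ₂ × Λ₃ => (q.1, q.2.2) := by fun_prop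
  have m₁₂ : Measurable fun q : Λ₁ × Λ₂ × Λ₃ => (q.1, q.2.1) := by fun_prop
  have hb := fun a => (uB a).comp m₁₃
  have hm := fun a a' => (uM a a').comp m₁₂
  have hc := fun a => (uC a).comp (measurable_snd (α := Λ₁) (β := Λ₂ × Λ₃))
  have hbmc := fun a₁ a₂ a₃ a₄ => ((hb a₁).mul (hm a₂ a₃)).mul (hc a₄)
  have hP' : ∀ a₁ a₂ a₃ a₄, P a₁ a₂ a₃ a₄ =
      ∫ q, pB a₁ q.1 q.2.2 * pM a₂ a₃ q.1 q.2.1 * pC a₄ q.2.1 q.2.2 ∂(μ₁.prod (μ₂.prod μ₃)) := by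
    intro a₁ a₂ a₃ a₄
    rw [hP, integral_prod _ ((hbmc a₁ a₂ a₃ a₄).integrable (μ₁.prod (μ₂.prod μ₃)))]
    refine integral_congr_ae (ae_of_all _ fun x₁ => ?_)
    exact (integral_prod _ (((hbmc a₁ a₂ a₃ a₄).comp
      (measurable_prodMk_left (x := x₁))).integrable (μ₂.prod μ₃))).symm
  have ae_zero : ∀ {a₁ a₂ a₃ a₄}, P a₁ a₂ a₃ a₄ = 0 →
      ∀ᵐ q ∂(μ₁.prod (μ₂.prod μ₃)), pB a₁ q.1 q.2.2 * pM a₂ a₃ q.1 q.2.1 * pC a₄ q.2.1 q.2.2 = 0 := by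
    intro a₁ a₂ a₃ a₄ h
    rw [hP'] at h
    exact (integral_eq_zero_iff_of_nonneg (hbmc a₁ a₂ a₃ a₄).nonneg
      ((hbmc a₁ a₂ a₃ a₄).integrable (μ₁.prod (μ₂.prod μ₃)))).1 h
  have mL : Measurable fun q : Λ₁ × Λ₂ => lightWeight pM q.1 q.2 := measurable_lightWeight mM
  have exBM : ∀ᵐ q ∂(μ₁.prod (μ₂.prod μ₃)), pB Outc.zero q.1 q.2.2 * lightWeight pM q.1 q.2.1 = 0 := by
    have h : ∀ a₂ a₃ a₄, ∀ᵐ q ∂(μ₁.prod (μ₂.prod μ₃)), a₂.tokens + a₃.tokens = 1 →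
        pB Outc.zero q.1 q.2.2 * pM a₂ a₃ q.1 q.2.1 * pC a₄ q.2.1 q.2.2 = 0 := by
      intro a₂ a₃ a₄
      by_cases h : a₂.tokens + a₃.tokens = 1
      · exact (ae_zero (zBM a₂ a₃ a₄ h)).mono fun q hq _ => hq
      · simp [h]
    simp only [← ae_all_iff] at h
    filter_upwards [h] with q hq
    simp only [lightWeight, Finset.mul_sum]
    refine Finset.sum_eq_zero fun a₂ _ => Finset.sum_eq_zero fun a₃ _ => ?_
    split_ifs with h
    · rw [← mul_one (pB _ _ _ * _), ← (kC q.2.1 q.2.2).2, Finset.mul_sum]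
      exact Finset.sum_eq_zero fun a₄ _ => hq a₂ a₃ a₄ h
    · simp
  have exMC : ∀ᵐ q ∂(μ₁.prod (μ₂.prod μ₃)), lightWeight pM q.1 q.2.1 * pC Outc.zero q.2.1 q.2.2 = 0 := by
    have h : ∀ a₁ a₂ a₃, ∀ᵐ q ∂(μ₁.prod (μ₂.prod μ₃)), a₂.tokens + a₃.tokens = 1 →
        pB a₁ q.1 q.2.2 * pM a₂ a₃ q.1 q.2.1 * pC Outc.zero q.2.1 q.2.2 = 0 := by
      intro a₁ a₂ a₃
      by_cases h : a₂.tokens + a₃.tokens = 1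
      · exact (ae_zero (zMC a₁ a₂ a₃ h)).mono fun q hq _ => hq
      · simp [h]
    simp only [← ae_all_iff] at h
    filter_upwards [h] with q hq
    simp only [lightWeight, Finset.sum_mul]
    refine Finset.sum_eq_zero fun a₂ _ => Finset.sum_eq_zero fun a₃ _ => ?_
    split_ifs with h
    · rw [← one_mul (pM _ _ _ _ * _), ← (kB q.1 q.2.2).2, Finset.sum_mul]
      exact Finset.sum_eq_zero fun a₁ _ => (mul_assoc _ _ _).symm.trans (hq a₁ a₂ a₃ h)
    · simp
  have exBC : ∀ᵐ q ∂(μ₁.prod (μ₂.prod μ₃)), pB Outc.zero q.1 q.2.2 * pC Outc.zero q.2.1 q.2.2 = 0 := by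
    have h := fun a₂ a₃ => ae_zero (zBC a₂ a₃)
    simp only [← ae_all_iff] at h
    filter_upwards [h] with q hq
    rw [← one_mul (_ * _), ← (kM q.1 q.2.1).2]
    simp only [Finset.sum_mul]
    refine Finset.sum_eq_zero fun a₂ _ => Finset.sum_eq_zero fun a₃ _ => ?_
    linear_combination hq a₂ a₃
  obtain ⟨T₁, hT₁, zB₁, zM₁⟩ := exists_separating_set
    (measurePreserving_swap_right μ₁ μ₂ μ₃) (mB Outc.zero) mL
    (fun x y => (kB x y).1 _) exBM
  obtain ⟨T₂, hT₂, zM₂, zC₂⟩ := exists_separating_set (f := fun y x => lightWeight pM x y)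
    (measurePreserving_second μ₁ μ₂ μ₃) (mL.comp measurable_swap) (mC Outc.zero)
    (fun y x => lightWeight_nonneg (kM x y).1) exMC
  obtain ⟨T₃, hT₃, zB₃, zC₃⟩ := exists_separating_set (f := fun z x => pB Outc.zero x z)
    (g := fun z y => pC Outc.zero y z) (measurePreserving_third μ₁ μ₂ μ₃)
    ((mB Outc.zero).comp measurable_swap)
    ((mC Outc.zero).comp measurable_swap) (fun z x => (kB x z).1 _) exBC
  refine TokenModel.nonempty_of_sets μ₁ μ₂ μ₃ uB uM uC (fun x y => (kB x y).2)
    (fun x y => (kM x y).2) (fun x y => (kC x y).2) hP' hT₁ hT₂ hT₃.compl zB₁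
    zB₃ (fun a a' ha => zM₁.mono fun q h hq => ?_) (fun a a' ha => zM₂.mono fun q h hq => ?_)
    zC₂ (zC₃.mono fun q h hq => h (not_not.1 hq))
  exacts [eq_zero_of_lightWeight_eq_zero (kM _ _).1 (h hq) ha,
    eq_zero_of_lightWeight_eq_zero (kM _ _).1 (h hq) ha]

end Local

/-- For every real `u` with `0.841 < u < 1`, the square-network quantum
distribution `P_Q^□` is nonlocal on the triangle network obtained by merging parties
`A₂` and `A₃` into a single party `M` (sources: `λ₁` between `B = A₁` and `M`, `λ₂`
between `M` and `C = A₄`, `λ₃` between `C` and `B`). -/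
theorem stmt_2 (u : ℝ) (hu : (0.841 : ℝ) < u) (hu1 : u < 1) :
    ¬ ∃ (Λ₁ Λ₂ Λ₃ : Type)
        (m₁ : MeasurableSpace Λ₁) (m₂ : MeasurableSpace Λ₂) (m₃ : MeasurableSpace Λ₃)
        (μ₁ : @Measure Λ₁ m₁) (μ₂ : @Measure Λ₂ m₂) (μ₃ : @Measure Λ₃ m₃)
        (pB : Outc → Λ₁ → Λ₃ → ℝ) (pM : Outc → Outc → Λ₁ → Λ₂ → ℝ)
        (pC : Outc → Λ₂ → Λ₃ → ℝ),
      IsProbabilityMeasure μ₁ ∧ IsProbabilityMeasure μ₂ ∧ IsProbabilityMeasure μ₃ ∧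
      (∀ a, @Measurable _ _ (m₁.prod m₃) _ fun q : Λ₁ × Λ₃ => pB a q.1 q.2) ∧
      (∀ a a', @Measurable _ _ (m₁.prod m₂) _ fun q : Λ₁ × Λ₂ => pM a a' q.1 q.2) ∧
      (∀ a, @Measurable _ _ (m₂.prod m₃) _ fun q : Λ₂ × Λ₃ => pC a q.1 q.2) ∧
      (∀ x y, (∀ a, 0 ≤ pB a x y) ∧ ∑ a, pB a x y = 1) ∧
      (∀ x y, (∀ a a', 0 ≤ pM a a' x y) ∧ ∑ a, ∑ a', pM a a' x y = 1) ∧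
      (∀ x y, (∀ a, 0 ≤ pC a x y) ∧ ∑ a, pC a x y = 1) ∧
      (∀ a₁ a₂ a₃ a₄ : Outc,
        ringP 4 u ![a₁, a₂, a₃, a₄] =
          ∫ x₁, ∫ x₂, ∫ x₃,
            pB a₁ x₁ x₃ * pM a₂ a₃ x₁ x₂ * pC a₄ x₂ x₃ ∂μ₃ ∂μ₂ ∂μ₁) := by
  rintro ⟨Λ₁, Λ₂, Λ₃, m₁, m₂, m₃, μ₁, μ₂, μ₃, pB, pM, pC, i₁, i₂, i₃, mB, mM, mC, kB, kM, kC, hP⟩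
  have tokens_le : ∀ a : Outc, a.tokens ≤ 2 := by rintro (_ | _ | _) <;> simp [Outc.tokens]
  have tokens_zero : Outc.zero.tokens = 0 := rfl
  obtain ⟨D⟩ := TokenModel.nonempty_of_local (P := fun a b c d => ringP 4 u ![a, b, c, d])
    μ₁ μ₂ μ₃ mB mM mC kB kM kC hP
    (fun a b c h => ringP_four_eq_zero u <| by
      have := tokens_le c
      omega)
    (fun a b c h => ringP_four_eq_zero u <| by
      have := tokens_le a
      omega)
    (fun a b => ringP_four_eq_zero u <| by
      omega)
  have h₁ : u ^ 2 < 1 := by nlinarith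
  have h₂ := D.u_pow_four_le h₁.le h₁.ne
  have h₃ : (0.841 : ℝ) ^ 4 < u ^ 4 := pow_lt_pow_left₀ hu (by norm_num) (by norm_num)
  norm_num at h₃
  linarith
end
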